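/- The square root of the tangent-point energy is globally Lipschitz continuous with respect to the geodesic distance of G: with p = 2s + 1, for all γ₀, γ₁ ∈ 𝓜 one has |√(E(γ₁)) − √(E(γ₀))| ≤ √(1 + p/4) · d_G(γ₁, γ₀). In particular, E is bounded on every G-bounded subset of 𝓜. -/

import Mathlib

open MeasureTheory Real Filter Set
open scoped ENNReal Topology RealInnerProductSpace

noncomputable section

/-- Euclidean space `ℝⁿ`. -/
abbrev En (n : ℕ) : Type := EuclideanSpace ℝ (Fin n)

/-- A fundamental domain for the circle `𝕋 = ℝ/ℤ`. -/
def I01 : Set ℝ := Set.Ico (0 : ℝ) 1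

/-- The intrinsic distance on `𝕋 = ℝ/ℤ`, expressed for real representatives. -/
def dT (x y : ℝ) : ℝ := ⨅ k : ℤ, |x - y - (k : ℝ)|

/-- Supremum norm of a (periodic) function on the circle. -/
def supNorm {E : Type*} [NormedAddCommGroup E] (f : ℝ → E) : ℝ := ⨆ x : ℝ, ‖f x‖

/-- The squared Gagliardo seminorm `[v]_{H^σ}²` of a function on the circle, valued in `[0,∞]`. -/
def gagliardoSqE {E : Type*} [NormedAddCommGroup E] (σ : ℝ) (v : ℝ → E) : ℝ≥0∞ :=
  ∫⁻ x in I01, ∫⁻ y in I01, ENNReal.ofReal (‖v y - v x‖ ^ 2 / dT x y ^ (2 * σ + 1))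

/-- Membership in the Sobolev–Slobodeckij space `H^s(𝕋, ℝⁿ)`; for `s ∈ (3/2,2)` such
functions have a `C¹` representative, which we take as the defining data. -/
def InHs {n : ℕ} (s : ℝ) (u : ℝ → En n) : Prop :=
  Function.Periodic u 1 ∧ ContDiff ℝ 1 u ∧ gagliardoSqE (s - 1) (deriv u) < ⊤

/-- The squared `H^s` norm `‖u‖²_{L²} + ‖u'‖²_{L²} + [u']²_{H^{s-1}}`. -/
def HsNormSq {n : ℕ} (s : ℝ) (u : ℝ → En n) : ℝ :=
  (∫ x in I01, ‖u x‖ ^ 2) + (∫ x in I01, ‖deriv u x‖ ^ 2) +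
    (gagliardoSqE (s - 1) (deriv u)).toReal

/-- The `H^s` norm. -/
def HsNorm {n : ℕ} (s : ℝ) (u : ℝ → En n) : ℝ := Real.sqrt (HsNormSq s u)

/-- The `H^s` inner product. -/
def HsInner {n : ℕ} (s : ℝ) (u v : ℝ → En n) : ℝ :=
  (∫ x in I01, ⟪u x, v x⟫) + (∫ x in I01, ⟪deriv u x, deriv v x⟫) +
    ∫ x in I01, ∫ y in I01,
      ⟪deriv u y - deriv u x, deriv v y - deriv v x⟫ / dT x y ^ (2 * (s - 1) + 1)

/-- The manifold `𝓜` of embedded closed curves of class `H^s`: injective (on the circle)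
immersions. -/
def InM {n : ℕ} (s : ℝ) (γ : ℝ → En n) : Prop :=
  InHs s γ ∧ Set.InjOn γ I01 ∧ ∀ x, deriv γ x ≠ 0

/-- The length `L(γ)`. -/
def arcLen {n : ℕ} (γ : ℝ → En n) : ℝ := ∫ x in I01, ‖deriv γ x‖

/-- The arc-length distance `d_γ(x,y)`: the length of the shorter of the two arcs of `γ`
between `x` and `y`. -/
def arcDist {n : ℕ} (γ : ℝ → En n) (x y : ℝ) : ℝ :=
  ⨅ k : ℤ, |∫ t in x..(y + (k : ℝ)), ‖deriv γ t‖|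

/-- Derivative with respect to arc length, `D_γ u = u' / |γ'|`. -/
def Dg {n : ℕ} (γ u : ℝ → En n) (x : ℝ) : En n := ‖deriv γ x‖⁻¹ • deriv u x

/-- `𝒟_γ u (x)`, the pointwise linear map `w ↦ |γ'(x)|⁻² ⟪γ'(x), w⟫ u'(x)`. -/
def DDg {n : ℕ} (γ u : ℝ → En n) (x : ℝ) (w : En n) : En n :=
  ((‖deriv γ x‖ ^ 2)⁻¹ * ⟪deriv γ x, w⟫) • deriv u x

/-- The operator `R^s_γ`. -/
def Rop {n : ℕ} (s : ℝ) (γ u : ℝ → En n) (x y : ℝ) : En n :=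
  (‖γ y - γ x‖ ^ s)⁻¹ • (u y - u x - DDg γ u x (γ y - γ x))

/-- Density of the measure `μ_γ` with respect to `λ ⊗ λ` on `𝕋 × 𝕋`. -/
def muW {n : ℕ} (γ : ℝ → En n) (x y : ℝ) : ℝ :=
  ‖deriv γ x‖ * ‖deriv γ y‖ / ‖γ y - γ x‖

/-- Density of the measure `ν_γ` with respect to `λ ⊗ λ` on `𝕋 × 𝕋`. -/
def nuW {n : ℕ} (γ : ℝ → En n) (x y : ℝ) : ℝ :=
  ‖deriv γ x‖ * ‖deriv γ y‖ / arcDist γ x y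

/-- The tangent-point energy, valued in `[0,∞]`. -/
def EtpE {n : ℕ} (s : ℝ) (γ : ℝ → En n) : ℝ≥0∞ :=
  ∫⁻ x in I01, ∫⁻ y in I01, ENNReal.ofReal (‖Rop s γ γ x y‖ ^ 2 * muW γ x y)

/-- The tangent-point energy, real-valued (finite on `𝓜`). -/
def Etp {n : ℕ} (s : ℝ) (γ : ℝ → En n) : ℝ := (EtpE s γ).toReal

/-- `‖R^s_γ u‖²_{L²(ν_γ)}`, valued in `[0,∞]`. -/
def RnuSqE {n : ℕ} (s : ℝ) (γ u : ℝ → En n) : ℝ≥0∞ :=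
  ∫⁻ x in I01, ∫⁻ y in I01, ENNReal.ofReal (‖Rop s γ u x y‖ ^ 2 * nuW γ x y)

/-- `‖R^s_γ u‖²_{L²(ν_γ)}`, real-valued. -/
def RnuSq {n : ℕ} (s : ℝ) (γ u : ℝ → En n) : ℝ := (RnuSqE s γ u).toReal

/-- The squared `γ`-dependent seminorm `[u]²_{H^s(γ)}`, valued in `[0,∞]`. -/
def gagGammaSqE {n : ℕ} (s : ℝ) (γ u : ℝ → En n) : ℝ≥0∞ :=
  ∫⁻ x in I01, ∫⁻ y in I01,
    ENNReal.ofReal (‖Dg γ u y - Dg γ u x‖ ^ 2 / arcDist γ x y ^ (2 * (s - 1)) * nuW γ x y)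

/-- The squared `γ`-dependent seminorm `[u]²_{H^s(γ)}`, real-valued. -/
def gagGammaSq {n : ℕ} (s : ℝ) (γ u : ℝ → En n) : ℝ := (gagGammaSqE s γ u).toReal

/-- The inner product `⟨u,v⟩_{L²(γ)}`. -/
def innerL2g {n : ℕ} (γ u v : ℝ → En n) : ℝ := ∫ x in I01, ⟪u x, v x⟫ * ‖deriv γ x‖

/-- The inner product `⟨u,v⟩_{H¹(γ)}`. -/
def innerH1g {n : ℕ} (γ u v : ℝ → En n) : ℝ :=
  ∫ x in I01, ⟪Dg γ u x, Dg γ v x⟫ * ‖deriv γ x‖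

/-- The squared `γ`-dependent norm `‖u‖²_{H^s(γ)}`. -/
def HsGammaNormSq {n : ℕ} (s : ℝ) (γ u : ℝ → En n) : ℝ :=
  innerL2g γ u u + innerH1g γ u u + gagGammaSq s γ u

/-- The `γ`-dependent norm `‖u‖_{H^s(γ)}`. -/
def HsGammaNorm {n : ℕ} (s : ℝ) (γ u : ℝ → En n) : ℝ := Real.sqrt (HsGammaNormSq s γ u)

/-- The bilinear form `B¹_γ`. -/
def B1 {n : ℕ} (s : ℝ) (γ u v : ℝ → En n) : ℝ :=
  ∫ x in I01, ∫ y in I01, ⟪Rop s γ u x y, Rop s γ v x y⟫ * muW γ x y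

/-- The bilinear form `B²_γ`. -/
def B2 {n : ℕ} (s : ℝ) (γ u v : ℝ → En n) : ℝ :=
  ∫ x in I01, ∫ y in I01,
    ‖Rop s γ γ x y‖ ^ 2 * (⟪u y - u x, v y - v x⟫ / ‖γ y - γ x‖ ^ 2) * muW γ x y

/-- The bilinear form `B³_γ`. -/
def B3 {n : ℕ} (s : ℝ) (γ u v : ℝ → En n) : ℝ :=
  ∫ x in I01, ∫ y in I01,
    ‖Rop s γ γ x y‖ ^ 2 * (⟪Dg γ u x, Dg γ v x⟫ + ⟪Dg γ u y, Dg γ v y⟫) * muW γ x y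

/-- The Riemannian metric `G_γ(u,v)`. -/
def Gmet {n : ℕ} (s : ℝ) (γ u v : ℝ → En n) : ℝ :=
  2 * B1 s γ u v + (2 * s + 1) * B2 s γ u v + B3 s γ u v + innerH1g γ u v + innerL2g γ u v

/-- The distortion `distor(γ) = sup_{x ≠ y} d_γ(x,y)/|γ(y) − γ(x)|`, valued in `[0,∞]`. -/
def distorE {n : ℕ} (γ : ℝ → En n) : ℝ≥0∞ :=
  ⨆ (x ∈ I01) (y ∈ I01) (_ : x ≠ y), ENNReal.ofReal (arcDist γ x y / ‖γ y - γ x‖)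

/-- The distortion, real-valued. -/
def distor {n : ℕ} (γ : ℝ → En n) : ℝ := (distorE γ).toReal

/-- A `C¹` path `[0,1] → 𝓜 ⊂ H^s(𝕋,ℝⁿ)` (with respect to the `H^s` topology), recorded
together with its velocity field `V`. -/
structure C1Path (s : ℝ) (n : ℕ) where
  Γ : ℝ → ℝ → En n
  V : ℝ → ℝ → En n
  mem : ∀ t ∈ Set.Icc (0 : ℝ) 1, InM s (Γ t)
  memV : ∀ t ∈ Set.Icc (0 : ℝ) 1, InHs s (V t)
  isDeriv : ∀ t ∈ Set.Icc (0 : ℝ) 1,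
    Tendsto (fun h : ℝ => HsNorm s fun x => h⁻¹ • (Γ (t + h) x - Γ t x) - V t x)
      (𝓝[{h : ℝ | t + h ∈ Set.Icc (0 : ℝ) 1 ∧ h ≠ 0}] 0) (𝓝 0)
  contV : ∀ t ∈ Set.Icc (0 : ℝ) 1,
    Tendsto (fun τ : ℝ => HsNorm s fun x => V τ x - V t x) (𝓝[Set.Icc (0 : ℝ) 1] t) (𝓝 0)

/-- Length of a path with respect to `G`. -/
def pathLen {s : ℝ} {n : ℕ} (P : C1Path s n) : ℝ :=
  ∫ t in (0 : ℝ)..1, Real.sqrt (Gmet s (P.Γ t) (P.V t) (P.V t))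

/-- The path (Dirichlet) energy of a path with respect to `G`. -/
def pathEnergy {s : ℝ} {n : ℕ} (P : C1Path s n) : ℝ :=
  (1 / 2) * ∫ t in (0 : ℝ)..1, Gmet s (P.Γ t) (P.V t) (P.V t)

/-- The geodesic distance induced by `G`, valued in `[0,∞]` (`∞` if there is no path). -/
def geodDist (s : ℝ) {n : ℕ} (γ₀ γ₁ : ℝ → En n) : ℝ≥0∞ :=
  ⨅ (P : C1Path s n) (_ : P.Γ 0 = γ₀ ∧ P.Γ 1 = γ₁), ENNReal.ofReal (pathLen P)

/-- `U ⊆ 𝓜` is bounded with respect to the geodesic distance `d_G`. -/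
def GBounded (s : ℝ) {n : ℕ} (U : Set (ℝ → En n)) : Prop :=
  (∀ γ ∈ U, InM s γ) ∧
    ∃ γ₀, InM s γ₀ ∧ ∃ R : ℝ, ∀ γ ∈ U, geodDist s γ γ₀ ≤ ENNReal.ofReal R

/-- Weak convergence in the Hilbert space `H^s(𝕋,ℝⁿ)`. -/
def WeakHsTendsto {n : ℕ} (s : ℝ) (γk : ℕ → ℝ → En n) (γ : ℝ → En n) : Prop :=
  ∀ v : ℝ → En n, InHs s v →
    Tendsto (fun k => HsInner s (γk k) v) atTop (𝓝 (HsInner s γ v))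

/-- Directional derivative of `γ ↦ G_γ(u,v)` at `γ` in direction `w`. -/
def DGdir {n : ℕ} (s : ℝ) (γ w u v : ℝ → En n) : ℝ :=
  deriv (fun t : ℝ => Gmet s (fun x => γ x + t • w x) u v) 0

/-- `F'` is the derivative of the path `F` with respect to the `H^s` norm, on `S`. -/
def IsHsDerivOn {n : ℕ} (s : ℝ) (F F' : ℝ → ℝ → En n) (S : Set ℝ) : Prop :=
  ∀ t ∈ S,
    Tendsto (fun h : ℝ => HsNorm s fun x => h⁻¹ • (F (t + h) x - F t x) - F' t x)
      (𝓝[{h : ℝ | t + h ∈ S ∧ h ≠ 0}] 0) (𝓝 0)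

/-- The path `F` is continuous on `S` with respect to the `H^s` norm. -/
def HsContOn {n : ℕ} (s : ℝ) (F : ℝ → ℝ → En n) (S : Set ℝ) : Prop :=
  ∀ t ∈ S, Tendsto (fun τ : ℝ => HsNorm s fun x => F τ x - F t x) (𝓝[S] t) (𝓝 0)

/-- A solution of the geodesic initial value problem on `[0,∞)`, recorded as a triple
(position `Γ`, velocity `V`, acceleration `W`); the geodesic equation
`Γ̈ + A_Γ(Γ̇)Γ̇ = 0` is expressed weakly via the Koszul formula for the
Christoffel operator `A`. -/
def GeodesicSol {n : ℕ} (s : ℝ) (γ₀ v₀ : ℝ → En n) (Γ V W : ℝ → ℝ → En n) : Prop :=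
  (∀ t ∈ Set.Ici (0 : ℝ), InM s (Γ t) ∧ InHs s (V t) ∧ InHs s (W t)) ∧
  Γ 0 = γ₀ ∧ V 0 = v₀ ∧
  IsHsDerivOn s Γ V (Set.Ici 0) ∧ IsHsDerivOn s V W (Set.Ici 0) ∧
  HsContOn s V (Set.Ici 0) ∧ HsContOn s W (Set.Ici 0) ∧
  ∀ t ∈ Set.Ici (0 : ℝ), ∀ w : ℝ → En n, InHs s w →
    Gmet s (Γ t) (W t) w + DGdir s (Γ t) (V t) (V t) w
      - (1 / 2) * DGdir s (Γ t) w (V t) (V t) = 0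

/-!
Write `E(γ)` as `∫∫ ρ`, where `ρ(x, y) = |R^s_γ γ(x, y)|² |γ'(x)| |γ'(y)| / |γ(y) - γ(x)|` depends
only on the two-point jet `(γ'(x), γ'(y), γ(y) - γ(x))`, and write `G_γ(u, u)`, up to its
nonnegative zeroth- and first-order terms, as `∫∫ g` with `g` depending on the jets of `γ` and `u`.
Since `γ(y) - γ(x) - 𝒟_γ γ(x) (γ(y) - γ(x))` is orthogonal to `γ'(x)`, differentiating the
projection contributes nothing to `∂ₜ ρ` except through `R^s_γ u`, and the Cauchy–Schwarz inequality
applied to the three kinds of terms gives the pointwise bound `|∂ₜ ρ| ≤ 2 √ρ √(1 + p / 4) √g` along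
any path.

Hence `√ρ` varies by at most `√(1 + p / 4) ∫ √g dt` along a path for every fixed `(x, y)`, and
Minkowski's integral inequality in `L²(𝕋 × 𝕋)` turns this into a bound for `√E = ‖√ρ‖_{L²}` by
`√(1 + p / 4)` times the length of the path; `E` itself never has to be differentiated under the
integral. Integrability comes from `H^s ⊂ C¹` (Morrey), from a chord-arc constant uniform along the
compact path, and from controlling first-order Taylor remainders by the Gagliardo seminorm of `u'`.
-/

section RealAnalysis

theorem sqrt_add_sub_sqrt_add_le_integral {f f' h : ℝ → ℝ} {a b ε : ℝ} (hε : 0 < ε) (hab : a ≤ b)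
    (hf : ContinuousOn f (Icc a b)) (hf₀ : ∀ t ∈ Icc a b, 0 ≤ f t)
    (hf' : ∀ t ∈ Ioo a b, HasDerivAt f (f' t) t) (hh : IntegrableOn h (Icc a b))
    (hbound : ∀ t ∈ Ioo a b, f' t ≤ 2 * (√(f t) * h t)) (hh₀ : ∀ t, 0 ≤ h t) :
    √(f b + ε) - √(f a + ε) ≤ ∫ t in a..b, h t := by
  refine intervalIntegral.sub_le_integral_of_hasDeriv_right_of_le
    (g := fun t => √(f t + ε)) (g' := fun t => f' t / (2 * √(f t + ε))) hab
    (hf.add continuousOn_const).sqrt (fun t ht => ?_) hh fun t ht => ?_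
  all_goals have hpos : 0 < f t + ε := add_pos_of_nonneg_of_pos (hf₀ t (Ioo_subset_Icc_self ht)) hε
  · exact (((hf' t ht).add_const ε).sqrt hpos.ne').hasDerivWithinAt
  · rw [div_le_iff₀ (by positivity)]
    calc f' t ≤ 2 * (√(f t) * h t) := hbound t ht
      _ ≤ 2 * (√(f t + ε) * h t) := by
        have := hh₀ t
        gcongr
        exact le_add_of_nonneg_right hε.le
      _ = h t * (2 * √(f t + ε)) := by ring

theorem sqrt_sub_sqrt_le_integral {f f' h : ℝ → ℝ} {a b : ℝ} (hab : a ≤ b)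
    (hf : ContinuousOn f (Icc a b)) (hf₀ : ∀ t ∈ Icc a b, 0 ≤ f t)
    (hf' : ∀ t ∈ Ioo a b, HasDerivAt f (f' t) t) (hh : IntegrableOn h (Icc a b))
    (hbound : ∀ t ∈ Ioo a b, f' t ≤ 2 * (√(f t) * h t)) (hh₀ : ∀ t, 0 ≤ h t) :
    √(f b) - √(f a) ≤ ∫ t in a..b, h t := by
  have hlim : Tendsto (fun ε => √(f b + ε) - √(f a + ε)) (𝓝[>] 0) (𝓝 (√(f b) - √(f a))) := by
    have hc : Continuous fun ε => √(f b + ε) - √(f a + ε) := by fun_prop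
    simpa only [add_zero] using (hc.tendsto 0).mono_left nhdsWithin_le_nhds
  refine le_of_tendsto hlim ?_
  filter_upwards [self_mem_nhdsWithin] with ε hε
  exact sqrt_add_sub_sqrt_add_le_integral hε hab hf hf₀ hf' hh hbound hh₀

theorem abs_sqrt_sub_sqrt_le_integral {f f' h : ℝ → ℝ} {a b : ℝ} (hab : a ≤ b)
    (hf : ContinuousOn f (Icc a b)) (hf₀ : ∀ t ∈ Icc a b, 0 ≤ f t)
    (hf' : ∀ t ∈ Ioo a b, HasDerivAt f (f' t) t) (hh : IntegrableOn h (Icc a b))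
    (hbound : ∀ t ∈ Ioo a b, |f' t| ≤ 2 * (√(f t) * h t)) (hh₀ : ∀ t, 0 ≤ h t) :
    |√(f b) - √(f a)| ≤ ∫ t in a..b, h t := by
  refine abs_le'.2 ⟨sqrt_sub_sqrt_le_integral hab hf hf₀ hf' hh
    (fun t ht => (le_abs_self _).trans (hbound t ht)) hh₀, ?_⟩
  have hrefl : MapsTo (fun t => a + b - t) (Icc a b) (Icc a b) := fun t ht =>
    ⟨by linarith [ht.2], by linarith [ht.1]⟩
  have hrefl' : MapsTo (fun t => a + b - t) (Ioo a b) (Ioo a b) := fun t ht =>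
    ⟨by linarith [ht.2], by linarith [ht.1]⟩
  have hint : IntegrableOn (fun t => h (a + b - t)) (Icc a b) := by
    rw [← intervalIntegrable_iff_integrableOn_Icc_of_le hab] at hh ⊢
    simpa using (hh.comp_sub_left (a + b)).symm
  have key := sqrt_sub_sqrt_le_integral (f := fun t => f (a + b - t))
    (f' := fun t => -f' (a + b - t)) (h := fun t => h (a + b - t)) hab
    (hf.comp (by fun_prop) hrefl) (fun t ht => hf₀ _ (hrefl ht))
    (fun t ht => (hf' _ (hrefl' ht)).comp_const_sub (a + b) t) hint
    (fun t ht => (neg_le_abs _).trans (hbound _ (hrefl' ht))) fun t => hh₀ _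
  simpa using key

variable {Ω T : Type*} [MeasurableSpace Ω] [MeasurableSpace T]

theorem lintegral_rpow_le_lintegral_of_le_lintegral {ζ : Measure Ω} {τ : Measure T} [SFinite ζ]
    [SFinite τ] {p q : ℝ} (hpq : p.HolderConjugate q) {φ : Ω → ℝ≥0∞} {h : T → Ω → ℝ≥0∞}
    (hφ : AEMeasurable φ ζ) (hφ_fin : ∫⁻ z, φ z ^ p ∂ζ ≠ ⊤)
    (hh : AEMeasurable (Function.uncurry h) (τ.prod ζ))
    (hle : ∀ᵐ z ∂ζ, φ z ≤ ∫⁻ t, h t z ∂τ) :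
    (∫⁻ z, φ z ^ p ∂ζ) ^ (1 / p) ≤ ∫⁻ t, (∫⁻ z, h t z ^ p ∂ζ) ^ (1 / p) ∂τ := by
  set A := ∫⁻ z, φ z ^ p ∂ζ
  have hslice : ∀ᵐ t ∂τ, AEMeasurable (h t) ζ := by
    filter_upwards [hh.aestronglyMeasurable.prodMk_left] with t ht using ht.aemeasurable
  -- Hölder's inequality against the dual function `φ ^ (p - 1)`
  have holder : A ≤ (∫⁻ t, (∫⁻ z, h t z ^ p ∂ζ) ^ (1 / p) ∂τ) * A ^ (1 / q) := by
    calc A = ∫⁻ z, φ z * φ z ^ (p - 1) ∂ζ := lintegral_congr fun z => by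
          nth_rw 2 [← ENNReal.rpow_one (φ z)]
          rw [← ENNReal.rpow_add_of_nonneg _ _ zero_le_one hpq.sub_one_pos.le, add_sub_cancel]
      _ ≤ ∫⁻ z, ∫⁻ t, h t z * φ z ^ (p - 1) ∂τ ∂ζ := by
          refine lintegral_mono_ae ?_
          filter_upwards [hle, hh.prod_swap.aestronglyMeasurable.prodMk_left] with z hz hm
          have hm' : AEMeasurable (fun t => h t z) τ := hm.aemeasurable
          rw [lintegral_mul_const'' _ hm']
          gcongr
      _ = ∫⁻ t, ∫⁻ z, h t z * φ z ^ (p - 1) ∂ζ ∂τ :=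
          (lintegral_lintegral_swap (hh.mul ((hφ.pow_const _).comp_quasiMeasurePreserving
            Measure.quasiMeasurePreserving_snd))).symm
      _ ≤ ∫⁻ t, (∫⁻ z, h t z ^ p ∂ζ) ^ (1 / p) * A ^ (1 / q) ∂τ := by
          refine lintegral_mono_ae ?_
          filter_upwards [hslice] with t ht
          exact ENNReal.lintegral_mul_rpow_le_lintegral_rpow_mul_lintegral_rpow hpq ht hφ
      _ = _ :=
        lintegral_mul_const' _ _ (ENNReal.rpow_ne_top_of_nonneg hpq.symm.one_div_nonneg hφ_fin)
  rcases eq_or_ne A 0 with h0 | h0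
  · rw [h0, ENNReal.zero_rpow_of_pos hpq.one_div_pos]
    exact zero_le
  · have hsplit : A ^ (1 / p) * A ^ (1 / q) = A := by
      rw [← ENNReal.rpow_add _ _ h0 hφ_fin, one_div, one_div, hpq.inv_add_inv_eq_one,
        ENNReal.rpow_one]
    have hA₀ : A ^ (1 / q) ≠ 0 := by simp [h0, hφ_fin]
    have hA_top : A ^ (1 / q) ≠ ⊤ := ENNReal.rpow_ne_top_of_nonneg hpq.symm.one_div_nonneg hφ_fin
    exact (ENNReal.mul_le_mul_iff_left hA₀ hA_top).1 (hsplit.trans_le holder)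

theorem memLp_two_sqrt {ζ : Measure Ω} {f : Ω → ℝ} (hf : Integrable f ζ) (hf₀ : ∀ z, 0 ≤ f z) :
    MemLp (fun z => √(f z)) 2 ζ := by
  rw [memLp_two_iff_integrable_sq hf.aemeasurable.sqrt.aestronglyMeasurable]
  simpa only [sq_sqrt (hf₀ _)] using hf

theorem abs_sqrt_integral_sub_sqrt_integral_le {ζ : Measure Ω} {f₀ f₁ : Ω → ℝ}
    (hf₀ : Integrable f₀ ζ) (hf₁ : Integrable f₁ ζ) (h₀ : ∀ z, 0 ≤ f₀ z) (h₁ : ∀ z, 0 ≤ f₁ z) :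
    ENNReal.ofReal |√(∫ z, f₁ z ∂ζ) - √(∫ z, f₀ z ∂ζ)| ≤
      (∫⁻ z, ENNReal.ofReal |√(f₁ z) - √(f₀ z)| ^ (2 : ℝ) ∂ζ) ^ (1 / 2 : ℝ) := by
  have hL₀ := memLp_two_sqrt hf₀ h₀
  have hL₁ := memLp_two_sqrt hf₁ h₁
  have hnorm {f : Ω → ℝ} (hf : Integrable f ζ) (h : ∀ z, 0 ≤ f z) :
      ‖(memLp_two_sqrt hf h).toLp‖ = √(∫ z, f z ∂ζ) := by
    rw [Lp.norm_toLp, (memLp_two_sqrt hf h).eLpNorm_eq_integral_rpow_norm two_ne_zero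
      ENNReal.ofNat_ne_top, ENNReal.toReal_ofReal (by positivity), sqrt_eq_rpow]
    simp [sq_sqrt (h _)]
  calc ENNReal.ofReal |√(∫ z, f₁ z ∂ζ) - √(∫ z, f₀ z ∂ζ)|
      ≤ ENNReal.ofReal ‖hL₁.toLp - hL₀.toLp‖ := by
        rw [← hnorm hf₀ h₀, ← hnorm hf₁ h₁]
        exact ENNReal.ofReal_le_ofReal (abs_norm_sub_norm_le _ _)
    _ = eLpNorm ((fun z => √(f₁ z)) - fun z => √(f₀ z)) 2 ζ := by
        rw [← MemLp.toLp_sub, Lp.norm_toLp, ENNReal.ofReal_toReal (hL₁.sub hL₀).eLpNorm_ne_top]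
    _ = _ := by
        rw [eLpNorm_eq_lintegral_rpow_enorm_toReal two_ne_zero ENNReal.ofNat_ne_top]
        simp [enorm_eq_ofReal_abs]

theorem abs_sqrt_integral_sub_sqrt_integral_le_lintegral {ζ : Measure Ω} {τ : Measure T}
    [SFinite ζ] [SFinite τ] {f₀ f₁ : Ω → ℝ} {h : T → Ω → ℝ≥0∞}
    (hf₀ : Integrable f₀ ζ) (hf₁ : Integrable f₁ ζ) (h₀ : ∀ z, 0 ≤ f₀ z) (h₁ : ∀ z, 0 ≤ f₁ z)
    (hh : AEMeasurable (Function.uncurry h) (τ.prod ζ))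
    (hle : ∀ᵐ z ∂ζ, ENNReal.ofReal |√(f₁ z) - √(f₀ z)| ≤ ∫⁻ t, h t z ∂τ) :
    ENNReal.ofReal |√(∫ z, f₁ z ∂ζ) - √(∫ z, f₀ z ∂ζ)| ≤
      ∫⁻ t, (∫⁻ z, h t z ^ (2 : ℝ) ∂ζ) ^ (1 / 2 : ℝ) ∂τ := by
  have hmeas : AEMeasurable (fun z => ENNReal.ofReal |√(f₁ z) - √(f₀ z)|) ζ := by
    have := hf₀.aemeasurable.sqrt
    have := hf₁.aemeasurable.sqrt
    fun_prop
  have hfin : ∫⁻ z, ENNReal.ofReal |√(f₁ z) - √(f₀ z)| ^ (2 : ℝ) ∂ζ ≠ ⊤ := by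
    have := ((memLp_two_sqrt hf₁ h₁).sub (memLp_two_sqrt hf₀ h₀)).eLpNorm_lt_top
    rw [eLpNorm_lt_top_iff_lintegral_rpow_enorm_lt_top two_ne_zero ENNReal.ofNat_ne_top] at this
    simpa [enorm_eq_ofReal_abs] using this.ne
  exact (abs_sqrt_integral_sub_sqrt_integral_le hf₀ hf₁ h₀ h₁).trans
    (lintegral_rpow_le_lintegral_of_le_lintegral Real.HolderConjugate.two_two hmeas hfin hh hle)

end RealAnalysis

section Jensen

variable {Ω Ω' E : Type*} [MeasurableSpace Ω] [MeasurableSpace Ω'] [NormedAddCommGroup E]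
  [NormedSpace ℝ E]

theorem enorm_integral_sq_le_lintegral_enorm_sq {μ : Measure Ω} [IsProbabilityMeasure μ]
    {f : Ω → E} (hf : AEStronglyMeasurable f μ) : ‖∫ z, f z ∂μ‖ₑ ^ 2 ≤ ∫⁻ z, ‖f z‖ₑ ^ 2 ∂μ := by
  have h12 : eLpNorm f 1 μ ≤ eLpNorm f 2 μ := eLpNorm_le_eLpNorm_of_exponent_le one_le_two hf
  rw [eLpNorm_one_eq_lintegral_enorm] at h12
  calc ‖∫ z, f z ∂μ‖ₑ ^ 2 ≤ eLpNorm f 2 μ ^ 2 := by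
        gcongr
        exact (enorm_integral_le_lintegral_enorm f).trans h12
    _ = ∫⁻ z, ‖f z‖ₑ ^ 2 ∂μ := by
        have := eLpNorm_nnreal_pow_eq_lintegral (f := f) (μ := μ) (p := 2) two_ne_zero
        simpa using this

theorem enorm_integral_sub_integral_sq_le {μ : Measure Ω} {ν : Measure Ω'} [IsProbabilityMeasure μ]
    [IsProbabilityMeasure ν] {f : Ω → E} {g : Ω' → E} (hf : Integrable f μ) (hg : Integrable g ν) :
    ‖(∫ x, f x ∂μ) - ∫ y, g y ∂ν‖ₑ ^ 2 ≤ ∫⁻ x, ∫⁻ y, ‖f x - g y‖ₑ ^ 2 ∂ν ∂μ := by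
  have hfg : Integrable (fun z : Ω × Ω' => f z.1 - g z.2) (μ.prod ν) :=
    (hf.comp_fst ν).sub (hg.comp_snd μ)
  have hsplit : ∫ z, f z.1 - g z.2 ∂μ.prod ν = (∫ x, f x ∂μ) - ∫ y, g y ∂ν := by
    rw [integral_sub (hf.comp_fst ν) (hg.comp_snd μ), integral_fun_fst, integral_fun_snd]
    simp
  rw [← hsplit, ← lintegral_prod _ (hfg.aestronglyMeasurable.enorm.pow_const 2)]
  exact enorm_integral_sq_le_lintegral_enorm_sq hfg.aestronglyMeasurable

end Jensen

section Circle

theorem dT_eq_norm (x y : ℝ) : dT x y = ‖((x - y : ℝ) : UnitAddCircle)‖ := by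
  rw [UnitAddCircle.norm_eq]
  exact le_antisymm (ciInf_le ⟨0, forall_mem_range.2 fun k => abs_nonneg _⟩ (round (x - y)))
    (le_ciInf fun k => round_le _ k)

theorem dT_le_abs_sub (x y : ℝ) : dT x y ≤ |x - y| := by
  rw [dT_eq_norm, UnitAddCircle.norm_eq]
  simpa using round_le (x - y) 0

theorem measurable_dT : Measurable fun q : ℝ × ℝ => dT q.1 q.2 := by
  simp only [dT_eq_norm]
  exact ((AddCircle.continuous_mk' 1).comp (continuous_fst.sub continuous_snd)).norm.measurable

/-- The fundamental domain of the circle centred at `0`, containing for each pair of points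
their shortest increment. -/
def symmDomain : Set ℝ := Ioc (-(1 / 2)) (1 / 2)

theorem measurableSet_symmDomain : MeasurableSet symmDomain := measurableSet_Ioc

instance : IsProbabilityMeasure (volume.restrict symmDomain) :=
  ⟨by simp [symmDomain]; norm_num⟩

instance : IsProbabilityMeasure (volume.restrict I01) := ⟨by simp [I01]⟩

theorem integrableOn_I01 {E : Type*} [NormedAddCommGroup E] {f : ℝ → E} (hf : Continuous f) :
    IntegrableOn f I01 :=
  hf.integrableOn_Icc.mono_set Ico_subset_Icc_self

theorem abs_le_half_of_mem_symmDomain {w : ℝ} (hw : w ∈ symmDomain) : |w| ≤ 1 / 2 :=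
  abs_le.2 ⟨hw.1.le, hw.2⟩

theorem mul_mem_symmDomain {θ w : ℝ} (hθ₀ : 0 ≤ θ) (hθ₁ : θ ≤ 1) (hw : w ∈ symmDomain) :
    θ * w ∈ symmDomain := by
  obtain ⟨h₁, h₂⟩ := hw
  constructor <;> nlinarith

theorem dT_add_right {x w : ℝ} (hw : w ∈ symmDomain) : dT x (x + w) = |w| := by
  rw [dT_eq_norm, sub_add_cancel_left, (AddCircle.norm_coe_eq_abs_iff 1 one_ne_zero).2, abs_neg]
  simpa using abs_le_half_of_mem_symmDomain hw

theorem dT_comm (x y : ℝ) : dT x y = dT y x := by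
  rw [dT_eq_norm, dT_eq_norm, ← neg_sub y x, AddCircle.coe_neg, norm_neg]

theorem dT_periodic (x : ℝ) : Function.Periodic (dT x) 1 := fun y => by
  simp only [dT_eq_norm, sub_add_eq_sub_sub, AddCircle.coe_sub, AddCircle.coe_period, sub_zero]

theorem eq_of_dT_eq_zero {E : Type*} {v : ℝ → E} (hv : Function.Periodic v 1) {x y : ℝ}
    (h : dT x y = 0) : v x = v y := by
  rw [dT_eq_norm, norm_eq_zero, AddCircle.coe_eq_zero_iff] at h
  obtain ⟨k, hk⟩ := h
  rw [← hv.zsmul k y, hk, add_sub_cancel]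

theorem dT_nonneg (x y : ℝ) : 0 ≤ dT x y := by
  rw [dT_eq_norm]
  exact norm_nonneg _

theorem lintegral_I01_eq_lintegral_symmDomain {f : ℝ → ℝ≥0∞} (hf : Function.Periodic f 1) (x : ℝ) :
    ∫⁻ y in I01, f y = ∫⁻ w in symmDomain, f (x + w) := by
  have hpre : (fun w => x + w) ⁻¹' Ioc (x - 1 / 2) (x - 1 / 2 + 1) = symmDomain := by
    rw [preimage_const_add_Ioc, symmDomain]
    congr 1 <;> ring
  calc ∫⁻ y in I01, f y = ∫⁻ y in Ioc 0 (0 + 1), f y := by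
        rw [I01, zero_add]
        exact setLIntegral_congr Ico_ae_eq_Ioc
    _ = ∫⁻ y in Ioc (x - 1 / 2) (x - 1 / 2 + 1), f y :=
        (isAddFundamentalDomain_Ioc one_pos 0 volume).setLIntegral_eq
          (isAddFundamentalDomain_Ioc one_pos (x - 1 / 2) volume) f hf.map_vadd_zmultiples
    _ = ∫⁻ w in symmDomain, f (x + w) := by
        rw [← (measurePreserving_add_left volume x).setLIntegral_comp_preimage_emb
          (measurableEmbedding_addLeft x), hpre]

theorem mul_lintegral_symmDomain_comp_mul_le {f : ℝ → ℝ≥0∞} (hf : Measurable f) {r : ℝ}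
    (hr₀ : 0 < r) (hr₁ : r ≤ 1) :
    ENNReal.ofReal r * ∫⁻ w in symmDomain, f (r * w) ≤ ∫⁻ w in symmDomain, f w := by
  have hJ := measurableSet_symmDomain
  calc ENNReal.ofReal r * ∫⁻ w in symmDomain, f (r * w)
      ≤ ENNReal.ofReal r * ∫⁻ w, symmDomain.indicator f (r * w) := by
        gcongr ENNReal.ofReal r * ?_
        rw [← lintegral_indicator hJ]
        refine lintegral_mono (indicator_le (g := fun w => symmDomain.indicator f (r * w))
          fun w hw => ?_)
        rw [indicator_of_mem (mul_mem_symmDomain hr₀.le hr₁ hw)]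
    _ = ∫⁻ w in symmDomain, f w := by
        rw [← lintegral_indicator hJ, ← abs_of_pos hr₀]
        conv_rhs => rw [← Real.smul_map_volume_mul_left hr₀.ne', lintegral_smul_measure,
          lintegral_map (hf.indicator hJ) (measurable_const_mul r), smul_eq_mul]
        rw [abs_of_pos hr₀]

theorem mul_lintegral_symmDomain_comp_affine_le {f : ℝ → ℝ≥0∞} (hf : Measurable f)
    (hper : Function.Periodic f 1) (x : ℝ) {r : ℝ} (hr₀ : 0 < r) (hr₁ : r ≤ 1) :
    ENNReal.ofReal r * ∫⁻ w in symmDomain, f (x + r * w) ≤ ∫⁻ y in I01, f y := by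
  rw [lintegral_I01_eq_lintegral_symmDomain hper x]
  exact mul_lintegral_symmDomain_comp_mul_le (hf.comp (measurable_const_add x)) hr₀ hr₁

end Circle

section Gagliardo

variable {E : Type*} [NormedAddCommGroup E] {σ : ℝ} {v : ℝ → E}

/-- The integrand of the squared Gagliardo seminorm. -/
def gagliardoKernel (σ : ℝ) (v : ℝ → E) (x y : ℝ) : ℝ≥0∞ :=
  ENNReal.ofReal (‖v y - v x‖ ^ 2 / dT x y ^ (2 * σ + 1))

theorem measurable_gagliardoKernel (σ : ℝ) (hv : Continuous v) :
    Measurable fun q : ℝ × ℝ => gagliardoKernel σ v q.1 q.2 := by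
  have hnum : Continuous fun q : ℝ × ℝ => ‖v q.2 - v q.1‖ ^ 2 := by fun_prop
  exact (hnum.measurable.div (measurable_dT.pow_const _)).ennreal_ofReal

theorem gagliardoKernel_periodic_left (σ : ℝ) (hv : Function.Periodic v 1) (y : ℝ) :
    Function.Periodic (fun x => gagliardoKernel σ v x y) 1 := fun x => by
  simp only [gagliardoKernel, hv x, dT_comm _ y, dT_periodic y x]

theorem gagliardoKernel_periodic_right (σ : ℝ) (hv : Function.Periodic v 1) (x : ℝ) :
    Function.Periodic (gagliardoKernel σ v x) 1 := fun y => by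
  simp only [gagliardoKernel, hv y, dT_periodic x y]

theorem enorm_sub_sq_le_mul_gagliardoKernel (hσ : 0 ≤ 2 * σ + 1) (hv : Function.Periodic v 1)
    {x y r : ℝ} (hxy : |x - y| ≤ r) :
    ‖v x - v y‖ₑ ^ 2 ≤ ENNReal.ofReal (r ^ (2 * σ + 1)) * gagliardoKernel σ v x y := by
  rcases (dT_nonneg x y).eq_or_lt with hd | hd
  · simp [eq_of_dT_eq_zero hv hd.symm]
  have hr : 0 ≤ r := (abs_nonneg _).trans hxy
  rw [gagliardoKernel, ← ENNReal.ofReal_mul (by positivity), enorm_sub_rev, ← ofReal_norm,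
    ← ENNReal.ofReal_pow (norm_nonneg _), mul_div_assoc']
  refine ENNReal.ofReal_le_ofReal ((le_div_iff₀ (by positivity)).2 ?_)
  rw [mul_comm]
  gcongr
  exact (dT_le_abs_sub x y).trans hxy

theorem gagliardoSqE_eq_lintegral_increment (σ : ℝ) (hv : Function.Periodic v 1) :
    gagliardoSqE σ v = ∫⁻ x in I01, ∫⁻ w in symmDomain,
      ENNReal.ofReal (‖v (x + w) - v x‖ ^ 2 / |w| ^ (2 * σ + 1)) := by
  refine lintegral_congr fun x => ?_
  refine (lintegral_I01_eq_lintegral_symmDomain (gagliardoKernel_periodic_right σ hv x) x).trans ?_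
  refine setLIntegral_congr_fun measurableSet_symmDomain fun w hw => ?_
  rw [gagliardoKernel, dT_add_right hw]

theorem lintegral_increment_comp_mul_le (hv : Continuous v) (hσ : 0 ≤ σ) (x : ℝ)
    {θ : ℝ} (hθ₀ : 0 < θ) (hθ₁ : θ ≤ 1) :
    ∫⁻ w in symmDomain, ENNReal.ofReal (‖v (x + θ * w) - v x‖ ^ 2 / |w| ^ (2 * σ + 1)) ≤
      ∫⁻ w in symmDomain, ENNReal.ofReal (‖v (x + w) - v x‖ ^ 2 / |w| ^ (2 * σ + 1)) := by
  have hm : Measurable fun w => ENNReal.ofReal (‖v (x + w) - v x‖ ^ 2 / |w| ^ (2 * σ + 1)) := by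
    have hnum : Continuous fun w => ‖v (x + w) - v x‖ ^ 2 := by fun_prop
    exact (hnum.measurable.div (measurable_id.abs.pow_const _)).ennreal_ofReal
  refine le_trans ?_ (mul_lintegral_symmDomain_comp_mul_le hm hθ₀ hθ₁)
  rw [← lintegral_const_mul' _ _ ENNReal.ofReal_ne_top]
  refine lintegral_mono fun w => ?_
  have hpow : θ ^ (2 * σ + 1) ≤ θ := by
    simpa using rpow_le_rpow_of_exponent_ge hθ₀ hθ₁ (show 1 ≤ 2 * σ + 1 by linarith)
  rw [← ENNReal.ofReal_mul hθ₀.le, abs_mul, abs_of_pos hθ₀, mul_rpow hθ₀.le (abs_nonneg w),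
    ← div_div, ← mul_div_assoc, ← mul_div_assoc]
  gcongr
  exact (le_div_iff₀' (by positivity)).2 (mul_le_mul_of_nonneg_right hpow (sq_nonneg _))

theorem gagliardoSqE_add_le (σ : ℝ) (hv : Continuous v) (w : ℝ → E) :
    gagliardoSqE σ (fun x => v x + w x) ≤ 2 * (gagliardoSqE σ v + gagliardoSqE σ w) := by
  have hmv := measurable_gagliardoKernel σ hv
  have hpt (x y : ℝ) : gagliardoKernel σ (fun x => v x + w x) x y ≤
      2 * (gagliardoKernel σ v x y + gagliardoKernel σ w x y) := by
    have hd : 0 ≤ dT x y ^ (2 * σ + 1) := rpow_nonneg (dT_nonneg x y) _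
    rw [gagliardoKernel, gagliardoKernel, gagliardoKernel, add_sub_add_comm,
      ← ENNReal.ofReal_add (by positivity) (by positivity), ← ENNReal.ofReal_ofNat 2,
      ← ENNReal.ofReal_mul zero_le_two, ← add_div, mul_div_assoc']
    gcongr
    exact (pow_le_pow_left₀ (norm_nonneg _) (norm_add_le _ _) 2).trans add_sq_le
  calc gagliardoSqE σ (fun x => v x + w x)
      ≤ ∫⁻ x in I01, ∫⁻ y in I01, 2 * (gagliardoKernel σ v x y + gagliardoKernel σ w x y) :=
        lintegral_mono fun x => lintegral_mono fun y => hpt x y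
    _ = ∫⁻ x in I01, 2 * ((∫⁻ y in I01, gagliardoKernel σ v x y) +
          ∫⁻ y in I01, gagliardoKernel σ w x y) := by
        refine lintegral_congr fun x => ?_
        rw [lintegral_const_mul' _ _ ENNReal.ofNat_ne_top,
          lintegral_add_left hmv.of_uncurry_left]
    _ = 2 * (gagliardoSqE σ v + gagliardoSqE σ w) := by
        rw [lintegral_const_mul' _ _ ENNReal.ofNat_ne_top,
          lintegral_add_left hmv.lintegral_prod_right']
        rfl

theorem gagliardoSqE_const_smul [NormedSpace ℝ E] (σ c : ℝ) (v : ℝ → E) :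
    gagliardoSqE σ (fun x => c • v x) = ENNReal.ofReal (c ^ 2) * gagliardoSqE σ v := by
  simp only [gagliardoSqE, ← smul_sub, norm_smul, mul_pow, norm_eq_abs, sq_abs, mul_div_assoc,
    ENNReal.ofReal_mul (sq_nonneg c), lintegral_const_mul' _ _ ENNReal.ofReal_ne_top]

theorem mul_lintegral_gagliardoKernel_comp_affine_le (hv : Continuous v)
    (hper : Function.Periodic v 1) (x : ℝ) {r ρ : ℝ} (hr₀ : 0 < r) (hr₁ : r ≤ 1) (hρ₀ : 0 < ρ)
    (hρ₁ : ρ ≤ 1) :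
    ENNReal.ofReal r * (ENNReal.ofReal ρ * ∫⁻ w in symmDomain, ∫⁻ w' in symmDomain,
      gagliardoKernel σ v (x + r * w) (x + ρ * w')) ≤ gagliardoSqE σ v := by
  have hm := measurable_gagliardoKernel σ hv
  calc _ ≤ ENNReal.ofReal r * ∫⁻ w in symmDomain, ∫⁻ y in I01,
        gagliardoKernel σ v (x + r * w) y := by
        gcongr ENNReal.ofReal r * ?_
        rw [← lintegral_const_mul' _ _ ENNReal.ofReal_ne_top]
        exact lintegral_mono fun w => mul_lintegral_symmDomain_comp_affine_le
          (hm.comp measurable_prodMk_left) (gagliardoKernel_periodic_right σ hper _) x hρ₀ hρ₁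
    _ ≤ gagliardoSqE σ v := mul_lintegral_symmDomain_comp_affine_le hm.lintegral_prod_right'
        (fun y => lintegral_congr fun y' => gagliardoKernel_periodic_left σ hper y' y) x hr₀ hr₁

variable [NormedSpace ℝ E]

theorem enorm_average_sub_average_half_sq_le (hσ : 0 ≤ 2 * σ + 1) (hv : Continuous v)
    (hper : Function.Periodic v 1) (x : ℝ) {r : ℝ} (hr₀ : 0 < r) (hr₁ : r ≤ 1) :
    ‖(∫ w in symmDomain, v (x + r * w)) - ∫ w in symmDomain, v (x + r / 2 * w)‖ₑ ^ 2 ≤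
      ENNReal.ofReal (2 * r ^ (2 * σ - 1)) * gagliardoSqE σ v := by
  have hint (ρ : ℝ) : IntegrableOn (fun w => v (x + ρ * w)) symmDomain :=
    (Continuous.integrableOn_Icc (by fun_prop)).mono_set Ioc_subset_Icc_self
  have hdist {w w' : ℝ} (hw : w ∈ symmDomain) (hw' : w' ∈ symmDomain) :
      |x + r * w - (x + r / 2 * w')| ≤ r := by
    obtain ⟨h₁, h₂⟩ := hw
    obtain ⟨h₃, h₄⟩ := hw'
    rw [abs_le]
    constructor <;> nlinarith
  have hpow : r ^ (2 * σ + 1) = 2 * r ^ (2 * σ - 1) * r * (r / 2) := by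
    rw [show 2 * σ + 1 = 2 * σ - 1 + 2 by ring, rpow_add hr₀, rpow_two]
    ring
  calc _ ≤ ∫⁻ w in symmDomain, ∫⁻ w' in symmDomain,
          ‖v (x + r * w) - v (x + r / 2 * w')‖ₑ ^ 2 :=
        enorm_integral_sub_integral_sq_le (hint r) (hint (r / 2))
    _ ≤ ∫⁻ w in symmDomain, ∫⁻ w' in symmDomain,
          ENNReal.ofReal (r ^ (2 * σ + 1)) * gagliardoKernel σ v (x + r * w) (x + r / 2 * w') :=
        setLIntegral_mono' measurableSet_symmDomain fun w hw =>
          setLIntegral_mono' measurableSet_symmDomain fun w' hw' =>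
            enorm_sub_sq_le_mul_gagliardoKernel hσ hper (hdist hw hw')
    _ = ENNReal.ofReal (2 * r ^ (2 * σ - 1)) * (ENNReal.ofReal r * (ENNReal.ofReal (r / 2) *
          ∫⁻ w in symmDomain, ∫⁻ w' in symmDomain,
            gagliardoKernel σ v (x + r * w) (x + r / 2 * w'))) := by
        simp only [lintegral_const_mul' _ _ ENNReal.ofReal_ne_top]
        rw [hpow, ENNReal.ofReal_mul (by positivity), ENNReal.ofReal_mul (by positivity)]
        ring
    _ ≤ ENNReal.ofReal (2 * r ^ (2 * σ - 1)) * gagliardoSqE σ v := by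
        gcongr
        exact mul_lintegral_gagliardoKernel_comp_affine_le hv hper x hr₀ hr₁ (half_pos hr₀)
          (by linarith)

theorem norm_average_sub_average_half_le (hσ : 0 ≤ 2 * σ + 1) (hv : Continuous v)
    (hper : Function.Periodic v 1) (hg : gagliardoSqE σ v ≠ ⊤) (x : ℝ) {r : ℝ} (hr₀ : 0 < r)
    (hr₁ : r ≤ 1) :
    ‖(∫ w in symmDomain, v (x + r * w)) - ∫ w in symmDomain, v (x + r / 2 * w)‖ ≤
      √2 * √(gagliardoSqE σ v).toReal * r ^ (σ - 1 / 2) := by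
  have h := ENNReal.toReal_mono (ENNReal.mul_ne_top ENNReal.ofReal_ne_top hg)
    (enorm_average_sub_average_half_sq_le hσ hv hper x hr₀ hr₁)
  rw [ENNReal.toReal_pow, toReal_enorm, ENNReal.toReal_mul,
    ENNReal.toReal_ofReal (by positivity)] at h
  refine abs_le_of_sq_le_sq' (h.trans_eq ?_) (by positivity) |>.2
  rw [mul_pow, mul_pow, sq_sqrt zero_le_two, sq_sqrt ENNReal.toReal_nonneg, ← rpow_natCast,
    ← rpow_mul hr₀.le]
  push_cast
  ring_nf

theorem tendsto_average (hv : Continuous v) [CompleteSpace E] (x : ℝ) :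
    Tendsto (fun r : ℝ => ∫ w in symmDomain, v (x + r * w)) (𝓝 0) (𝓝 (v x)) := by
  have hc : Continuous fun r : ℝ => ∫ w in (-(1 / 2) : ℝ)..(1 / 2), v (x + r * w) :=
    intervalIntegral.continuous_parametric_intervalIntegral_of_continuous' (by fun_prop) _ _
  have h0 : ∫ w in symmDomain, v (x + 0 * w) = v x := by simp
  rw [← h0]
  simpa only [symmDomain, intervalIntegral.integral_of_le (show -(1 / 2) ≤ (1 / 2 : ℝ) by norm_num)]
    using hc.tendsto 0

theorem integral_symmDomain_comp_add (hper : Function.Periodic v 1) (x : ℝ) :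
    ∫ w in symmDomain, v (x + w) = ∫ y in I01, v y := by
  have h := hper.intervalIntegral_add_eq (x - 1 / 2) 0
  rw [zero_add, intervalIntegral.integral_of_le zero_le_one, ← integral_Ico_eq_integral_Ioc] at h
  rw [I01, ← h, symmDomain, ← intervalIntegral.integral_of_le (by norm_num),
    intervalIntegral.integral_comp_add_left]
  congr 1
  ring

/-- The constant of the fractional Morrey inequality on the circle: the sum of the geometric series
of the increments of dyadic averages. -/
def morreyConst (σ : ℝ) : ℝ := √2 / (1 - (1 / 2) ^ (σ - 1 / 2))

theorem morreyConst_nonneg (hσ : 1 / 2 < σ) : 0 ≤ morreyConst σ :=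
  div_nonneg (sqrt_nonneg 2)
    (sub_nonneg.2 (rpow_le_one (by norm_num) (by norm_num) (by linarith)))

theorem norm_sub_integral_le [CompleteSpace E] (hσ : 1 / 2 < σ) (hv : Continuous v)
    (hper : Function.Periodic v 1) (hg : gagliardoSqE σ v ≠ ⊤) (x : ℝ) :
    ‖v x - ∫ y in I01, v y‖ ≤ morreyConst σ * √(gagliardoSqE σ v).toReal := by
  have hρ : (1 / 2 : ℝ) ^ (σ - 1 / 2) < 1 :=
    rpow_lt_one (by norm_num) (by norm_num) (by linarith)
  let a (k : ℕ) : E := ∫ w in symmDomain, v (x + (1 / 2) ^ k * w)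
  have hstep (k : ℕ) : dist (a k) (a (k + 1)) ≤
      √2 * √(gagliardoSqE σ v).toReal * ((1 / 2) ^ (σ - 1 / 2)) ^ k := by
    have h := norm_average_sub_average_half_le (by linarith) hv hper hg x (r := (1 / 2) ^ k)
      (by positivity) (pow_le_one₀ (by norm_num) (by norm_num))
    rw [← rpow_pow_comm (by norm_num)] at h
    rwa [dist_eq_norm, show a (k + 1) = ∫ w in symmDomain, v (x + (1 / 2) ^ k / 2 * w) by
      simp only [a, pow_succ, mul_one_div]]
  have hlim : Tendsto a atTop (𝓝 (v x)) := (tendsto_average hv x).comp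
    (tendsto_pow_atTop_nhds_zero_of_lt_one (by norm_num) (by norm_num))
  have h₀ : a 0 = ∫ y in I01, v y := by
    simp only [a, pow_zero, one_mul, integral_symmDomain_comp_add hper]
  calc ‖v x - ∫ y in I01, v y‖ = dist (a 0) (v x) := by rw [h₀, dist_comm, dist_eq_norm]
    _ ≤ √2 * √(gagliardoSqE σ v).toReal / (1 - (1 / 2) ^ (σ - 1 / 2)) :=
        dist_le_of_le_geometric_of_tendsto₀ _ _ hρ hstep hlim
    _ = morreyConst σ * √(gagliardoSqE σ v).toReal := by rw [morreyConst]; ring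

end Gagliardo

section Taylor

variable {E : Type*} [NormedAddCommGroup E] [NormedSpace ℝ E] {σ : ℝ} {u : ℝ → E}

/-- The first-order Taylor remainder `u (x + w) - u x - w • u' x`. -/
def taylorRemainder (u : ℝ → E) (x w : ℝ) : E := u (x + w) - u x - w • deriv u x

theorem integral_deriv_comp_add_mul [CompleteSpace E] (hu : ContDiff ℝ 1 u) (x w : ℝ) :
    w • ∫ θ in (0 : ℝ)..1, deriv u (x + θ * w) = u (x + w) - u x := by
  have h := intervalIntegral.integral_unitInterval_deriv_eq_sub (𝕜 := ℝ) (f := u)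
    (f' := deriv u) (z₀ := x) (z₁ := w)
    ((hu.continuous_deriv le_rfl).comp (by fun_prop)).continuousOn
    fun t _ => (hu.differentiable one_ne_zero _).hasDerivAt
  simpa only [smul_eq_mul] using h

theorem taylorRemainder_eq_integral [CompleteSpace E] (hu : ContDiff ℝ 1 u) (x w : ℝ) :
    taylorRemainder u x w = w • ∫ θ in Ioc (0 : ℝ) 1, (deriv u (x + θ * w) - deriv u x) := by
  have := hu.continuous_deriv le_rfl
  rw [← intervalIntegral.integral_of_le zero_le_one,
    intervalIntegral.integral_sub (Continuous.intervalIntegrable (by fun_prop) _ _)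
      intervalIntegrable_const, smul_sub, integral_deriv_comp_add_mul hu]
  simp [taylorRemainder]

theorem ofReal_taylorRemainder_div_le [CompleteSpace E] (hu : ContDiff ℝ 1 u) (x w : ℝ) :
    ENNReal.ofReal (‖taylorRemainder u x w‖ ^ 2 / |w| ^ (2 * σ + 3)) ≤ ∫⁻ θ in Ioc (0 : ℝ) 1,
      ENNReal.ofReal (‖deriv u (x + θ * w) - deriv u x‖ ^ 2 / |w| ^ (2 * σ + 1)) := by
  rcases eq_or_ne w 0 with rfl | hw
  · simp [taylorRemainder]
  have hw' : 0 < |w| := abs_pos.2 hw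
  have := hu.continuous_deriv le_rfl
  have : IsProbabilityMeasure (volume.restrict (Ioc (0 : ℝ) 1)) := ⟨by simp⟩
  have hjensen := enorm_integral_sq_le_lintegral_enorm_sq (μ := volume.restrict (Ioc (0 : ℝ) 1))
    (f := fun θ => deriv u (x + θ * w) - deriv u x)
    (Continuous.aestronglyMeasurable (by fun_prop))
  simp only [← ofReal_norm, ← ENNReal.ofReal_pow (norm_nonneg _)] at hjensen
  simp only [div_eq_mul_inv, ENNReal.ofReal_mul (sq_nonneg ‖_‖)]
  rw [lintegral_mul_const' _ _ ENNReal.ofReal_ne_top, taylorRemainder_eq_integral hu, norm_smul,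
    mul_pow, mul_comm (‖w‖ ^ 2), ENNReal.ofReal_mul (sq_nonneg _), mul_assoc,
    ← ENNReal.ofReal_mul (sq_nonneg _), norm_eq_abs]
  gcongr
  rw [show 2 * σ + 3 = 2 * σ + 1 + 2 by ring, rpow_add hw', rpow_two]
  field_simp
  rfl

theorem lintegral_taylorRemainder_le_gagliardoSqE [CompleteSpace E] (hσ : 0 ≤ σ)
    (hu : ContDiff ℝ 1 u) (hper : Function.Periodic (deriv u) 1) :
    ∫⁻ x in I01, ∫⁻ w in symmDomain,
      ENNReal.ofReal (‖taylorRemainder u x w‖ ^ 2 / |w| ^ (2 * σ + 3)) ≤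
        gagliardoSqE σ (deriv u) := by
  have hc := hu.continuous_deriv le_rfl
  rw [gagliardoSqE_eq_lintegral_increment σ hper]
  refine lintegral_mono fun x => ?_
  have hm : Measurable fun q : ℝ × ℝ =>
      ENNReal.ofReal (‖deriv u (x + q.2 * q.1) - deriv u x‖ ^ 2 / |q.1| ^ (2 * σ + 1)) := by
    have hnum : Continuous fun q : ℝ × ℝ => ‖deriv u (x + q.2 * q.1) - deriv u x‖ ^ 2 := by fun_prop
    exact (hnum.measurable.div (measurable_fst.abs.pow_const _)).ennreal_ofReal
  calc _ ≤ ∫⁻ w in symmDomain, ∫⁻ θ in Ioc (0 : ℝ) 1,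
        ENNReal.ofReal (‖deriv u (x + θ * w) - deriv u x‖ ^ 2 / |w| ^ (2 * σ + 1)) :=
        lintegral_mono fun w => ofReal_taylorRemainder_div_le hu x w
    _ = ∫⁻ θ in Ioc (0 : ℝ) 1, ∫⁻ w in symmDomain,
        ENNReal.ofReal (‖deriv u (x + θ * w) - deriv u x‖ ^ 2 / |w| ^ (2 * σ + 1)) :=
        lintegral_lintegral_swap hm.aemeasurable
    _ ≤ ∫⁻ θ in Ioc (0 : ℝ) 1, ∫⁻ w in symmDomain,
        ENNReal.ofReal (‖deriv u (x + w) - deriv u x‖ ^ 2 / |w| ^ (2 * σ + 1)) :=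
        setLIntegral_mono' measurableSet_Ioc fun θ hθ =>
          lintegral_increment_comp_mul_le hc hσ x hθ.1 hθ.2
    _ = _ := by simp

end Taylor

theorem periodic_deriv {E : Type*} [NormedAddCommGroup E] [NormedSpace ℝ E] {u : ℝ → E} {c : ℝ}
    (hu : Function.Periodic u c) : Function.Periodic (deriv u) c := fun x => by
  rw [← deriv_comp_add_const, show (fun y => u (y + c)) = u from funext hu]

theorem deriv_fun_const_smul_eq {E : Type*} [NormedAddCommGroup E] [NormedSpace ℝ E] (c : ℝ)
    (u : ℝ → E) : (deriv fun x => c • u x) = fun x => c • deriv u x :=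
  funext fun _ => deriv_fun_const_smul_field c u

theorem continuousOn_uncurry_of_norm_sub_le {X Y E : Type*} [TopologicalSpace X]
    [TopologicalSpace Y] [SeminormedAddCommGroup E] {F : X → Y → E} {S : Set X} {ω : X → X → ℝ}
    (hF : ∀ t ∈ S, Continuous (F t)) (hω : ∀ t ∈ S, Tendsto (ω t) (𝓝[S] t) (𝓝 0))
    (hle : ∀ t ∈ S, ∀ τ ∈ S, ∀ x, ‖F τ x - F t x‖ ≤ ω t τ) :
    ContinuousOn (Function.uncurry F) (S ×ˢ univ) := by
  rintro ⟨t, x⟩ ⟨ht : t ∈ S, -⟩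
  have hfst : Tendsto Prod.fst (𝓝[S ×ˢ univ] (t, x)) (𝓝[S] t) :=
    by
    rw [nhdsWithin_prod_eq]
    exact tendsto_fst
  have hsub : Tendsto (fun q : X × Y => F q.1 q.2 - F t q.2) (𝓝[S ×ˢ univ] (t, x)) (𝓝 0) := by
    refine squeeze_zero_norm' ?_ ((hω t ht).comp hfst)
    filter_upwards [self_mem_nhdsWithin] with q hq using hle t ht q.1 hq.1 q.2
  have hfix : Tendsto (fun q : X × Y => F t q.2) (𝓝[S ×ˢ univ] (t, x)) (𝓝 (F t x)) :=
    (((hF t ht).comp continuous_snd).tendsto (t, x)).mono_left nhdsWithin_le_nhds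
  simpa [ContinuousWithinAt, Function.uncurry_def] using hsub.add hfix

section SobolevSpace

variable {n : ℕ} {s : ℝ} {u v : ℝ → En n}

theorem InHs.continuous (hu : InHs s u) : Continuous u := hu.2.1.continuous

theorem InHs.differentiable (hu : InHs s u) : Differentiable ℝ u :=
  hu.2.1.differentiable one_ne_zero

theorem InHs.continuous_deriv (hu : InHs s u) : Continuous (deriv u) :=
  hu.2.1.continuous_deriv le_rfl

theorem InHs.deriv_add (hu : InHs s u) (hv : InHs s v) :
    deriv (fun x => u x + v x) = fun x => deriv u x + deriv v x :=
  funext fun x => deriv_fun_add (hu.differentiable x) (hv.differentiable x)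

theorem InHs.add (hu : InHs s u) (hv : InHs s v) : InHs s fun x => u x + v x := by
  refine ⟨hu.1.add hv.1, hu.2.1.add hv.2.1, ?_⟩
  rw [hu.deriv_add hv]
  exact (gagliardoSqE_add_le _ hu.continuous_deriv _).trans_lt
    (ENNReal.mul_lt_top (by simp) (ENNReal.add_lt_top.2 ⟨hu.2.2, hv.2.2⟩))

theorem InHs.const_smul (c : ℝ) (hu : InHs s u) : InHs s fun x => c • u x := by
  refine ⟨fun x => by simp only [hu.1 x], hu.2.1.const_smul c, ?_⟩
  rw [deriv_fun_const_smul_eq, gagliardoSqE_const_smul]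
  exact ENNReal.mul_lt_top ENNReal.ofReal_lt_top hu.2.2

theorem InHs.sub (hu : InHs s u) (hv : InHs s v) : InHs s fun x => u x - v x := by
  simpa [sub_eq_add_neg] using hu.add (hv.const_smul (-1))

theorem hsNormSq_nonneg (s : ℝ) (u : ℝ → En n) : 0 ≤ HsNormSq s u :=
  add_nonneg (add_nonneg (integral_nonneg fun _ => sq_nonneg _)
    (integral_nonneg fun _ => sq_nonneg _)) ENNReal.toReal_nonneg

theorem hsNorm_nonneg (s : ℝ) (u : ℝ → En n) : 0 ≤ HsNorm s u := sqrt_nonneg _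

theorem sq_hsNorm (s : ℝ) (u : ℝ → En n) : HsNorm s u ^ 2 = HsNormSq s u :=
  sq_sqrt (hsNormSq_nonneg s u)

theorem hsNorm_const_smul (s c : ℝ) (u : ℝ → En n) :
    HsNorm s (fun x => c • u x) = |c| * HsNorm s u := by
  have hsq : HsNormSq s (fun x => c • u x) = c ^ 2 * HsNormSq s u := by
    rw [HsNormSq, HsNormSq, deriv_fun_const_smul_eq, gagliardoSqE_const_smul, ENNReal.toReal_mul,
      ENNReal.toReal_ofReal (sq_nonneg c)]
    simp only [norm_smul, mul_pow, norm_eq_abs, sq_abs, integral_const_mul]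
    ring
  rw [HsNorm, hsq, sqrt_mul (sq_nonneg c), sqrt_sq_eq_abs, HsNorm]

theorem integral_norm_add_sq_le {E : Type*} [NormedAddCommGroup E] {u v : ℝ → E}
    (hu : Continuous u) (hv : Continuous v) : ∫ x in I01, ‖u x + v x‖ ^ 2 ≤
      2 * ((∫ x in I01, ‖u x‖ ^ 2) + ∫ x in I01, ‖v x‖ ^ 2) := by
  rw [← integral_add (integrableOn_I01 (by fun_prop)) (integrableOn_I01 (by fun_prop)),
    ← integral_const_mul]
  refine integral_mono (integrableOn_I01 (by fun_prop)) (integrableOn_I01 (by fun_prop))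
    fun x => ?_
  exact (pow_le_pow_left₀ (norm_nonneg _) (norm_add_le _ _) 2).trans add_sq_le

theorem hsNormSq_add_le (hu : InHs s u) (hv : InHs s v) :
    HsNormSq s (fun x => u x + v x) ≤ 2 * (HsNormSq s u + HsNormSq s v) := by
  have hgag : (gagliardoSqE (s - 1) fun x => deriv u x + deriv v x).toReal ≤
      2 * ((gagliardoSqE (s - 1) (deriv u)).toReal + (gagliardoSqE (s - 1) (deriv v)).toReal) := by
    have h := ENNReal.toReal_mono
      (ENNReal.mul_ne_top (by simp) (ENNReal.add_ne_top.2 ⟨hu.2.2.ne, hv.2.2.ne⟩))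
      (gagliardoSqE_add_le (s - 1) hu.continuous_deriv (deriv v))
    rwa [ENNReal.toReal_mul, ENNReal.toReal_add hu.2.2.ne hv.2.2.ne] at h
  have h₀ := integral_norm_add_sq_le hu.continuous hv.continuous
  have h₁ := integral_norm_add_sq_le hu.continuous_deriv hv.continuous_deriv
  rw [HsNormSq, hu.deriv_add hv, HsNormSq, HsNormSq]
  linarith

theorem hsNorm_add_le (hu : InHs s u) (hv : InHs s v) :
    HsNorm s (fun x => u x + v x) ≤ 2 * (HsNorm s u + HsNorm s v) := by
  have hu₀ := hsNorm_nonneg s u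
  have hv₀ := hsNorm_nonneg s v
  refine sqrt_le_iff.2 ⟨by positivity, (hsNormSq_add_le hu hv).trans ?_⟩
  rw [← sq_hsNorm, ← sq_hsNorm]
  nlinarith [mul_nonneg hu₀ hv₀]

theorem gagliardoSqE_deriv_le (hu : InHs s u) :
    gagliardoSqE (s - 1) (deriv u) ≤ ENNReal.ofReal (HsNorm s u ^ 2) := by
  rw [← ENNReal.ofReal_toReal hu.2.2.ne, sq_hsNorm]
  exact ENNReal.ofReal_le_ofReal (le_add_of_nonneg_left
    (add_nonneg (integral_nonneg fun _ => sq_nonneg _) (integral_nonneg fun _ => sq_nonneg _)))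

theorem norm_deriv_le_mul_hsNorm (hs : 3 / 2 < s) (hu : InHs s u) (x : ℝ) :
    ‖deriv u x‖ ≤ morreyConst (s - 1) * HsNorm s u := by
  have hmean : ∫ y in I01, deriv u y = 0 := by
    rw [I01, integral_Ico_eq_integral_Ioc, ← intervalIntegral.integral_of_le zero_le_one,
      intervalIntegral.integral_deriv_eq_sub (fun y _ => hu.differentiable y)
        (hu.continuous_deriv.intervalIntegrable 0 1), ← zero_add (1 : ℝ), hu.1 0, sub_self]
  have hσ : 1 / 2 < s - 1 := by linarith
  calc ‖deriv u x‖ = ‖deriv u x - ∫ y in I01, deriv u y‖ := by rw [hmean, sub_zero]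
    _ ≤ morreyConst (s - 1) * √(gagliardoSqE (s - 1) (deriv u)).toReal :=
        norm_sub_integral_le hσ hu.continuous_deriv (periodic_deriv hu.1) hu.2.2.ne x
    _ ≤ morreyConst (s - 1) * HsNorm s u := by
        gcongr
        · exact morreyConst_nonneg hσ
        · refine sqrt_le_iff.2 ⟨hsNorm_nonneg s u, ?_⟩
          exact ENNReal.toReal_le_of_le_ofReal (sq_nonneg _) (gagliardoSqE_deriv_le hu)

theorem norm_sub_le_mul_abs {E : Type*} [NormedAddCommGroup E] [NormedSpace ℝ E] {u : ℝ → E}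
    {L : ℝ} (hu : Differentiable ℝ u) (hL : ∀ x, ‖deriv u x‖ ≤ L) (x y : ℝ) :
    ‖u y - u x‖ ≤ L * |y - x| :=
  convex_univ.norm_image_sub_le_of_norm_deriv_le (fun z _ => hu z) (fun z _ => hL z)
    (mem_univ x) (mem_univ y)

theorem norm_integral_I01_le_hsNorm (hu : InHs s u) : ‖∫ x in I01, u x‖ ≤ HsNorm s u := by
  have hjensen : ‖∫ x in I01, u x‖ ^ 2 ≤ ∫ x in I01, ‖u x‖ ^ 2 := by
    have hint : Integrable (fun x => ‖u x‖ ^ 2) (volume.restrict I01) :=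
      integrableOn_I01 (hu.continuous.norm.pow 2)
    have h := enorm_integral_sq_le_lintegral_enorm_sq (μ := volume.restrict I01)
      hu.continuous.aestronglyMeasurable
    simp_rw [← ofReal_norm, ← ENNReal.ofReal_pow (norm_nonneg _)] at h
    rwa [← ofReal_integral_eq_lintegral_ofReal hint (ae_of_all _ fun _ => sq_nonneg _),
      ENNReal.ofReal_le_ofReal_iff (integral_nonneg fun _ => sq_nonneg _)] at h
  refine le_sqrt_of_sq_le (hjensen.trans ?_)
  rw [HsNormSq, add_assoc]
  exact le_add_of_nonneg_right
    (add_nonneg (integral_nonneg fun _ => sq_nonneg _) ENNReal.toReal_nonneg)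

theorem norm_le_mul_hsNorm (hs : 3 / 2 < s) (hu : InHs s u) (x : ℝ) :
    ‖u x‖ ≤ (1 + morreyConst (s - 1)) * HsNorm s u := by
  set L := morreyConst (s - 1) * HsNorm s u
  have hL : ∀ z, ‖deriv u z‖ ≤ L := norm_deriv_le_mul_hsNorm hs hu
  obtain ⟨y, hy, hxy⟩ := hu.1.exists_mem_Ico₀ one_pos x
  have hosc : ‖u x - ∫ z in I01, u z‖ ≤ L := by
    calc ‖u x - ∫ z in I01, u z‖ = ‖∫ z in I01, (u y - u z)‖ := by
          rw [integral_sub (integrable_const _) (integrableOn_I01 hu.continuous), hxy]; simp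
      _ ≤ L * volume.real I01 := norm_setIntegral_le_of_norm_le_const (by simp [I01])
          fun z hz => (norm_sub_le_mul_abs hu.differentiable hL z y).trans
            (mul_le_of_le_one_right ((norm_nonneg _).trans (hL 0))
              (abs_le.2 ⟨by linarith [hy.1, hz.2], by linarith [hy.2, hz.1]⟩))
      _ = L := by simp [I01]
  calc ‖u x‖ ≤ ‖∫ z in I01, u z‖ + ‖u x - ∫ z in I01, u z‖ := norm_le_norm_add_norm_sub' _ _
    _ ≤ HsNorm s u + L := add_le_add (norm_integral_I01_le_hsNorm hu) hosc
    _ = (1 + morreyConst (s - 1)) * HsNorm s u := by ring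

end SobolevSpace

section SobolevPath

variable {n : ℕ} {s : ℝ} {F F' : ℝ → ℝ → En n} {S : Set ℝ}

theorem HsContOn.continuousOn (hs : 3 / 2 < s) (hF : ∀ t ∈ S, InHs s (F t))
    (hc : HsContOn s F S) : ContinuousOn (Function.uncurry F) (S ×ˢ univ) :=
  continuousOn_uncurry_of_norm_sub_le (fun t ht => (hF t ht).continuous)
    (fun t ht => by simpa using (hc t ht).const_mul (1 + morreyConst (s - 1)))
    fun t ht τ hτ => norm_le_mul_hsNorm hs ((hF τ hτ).sub (hF t ht))

theorem HsContOn.continuousOn_deriv (hs : 3 / 2 < s) (hF : ∀ t ∈ S, InHs s (F t))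
    (hc : HsContOn s F S) :
    ContinuousOn (Function.uncurry fun t => deriv (F t)) (S ×ˢ univ) :=
  continuousOn_uncurry_of_norm_sub_le (fun t ht => (hF t ht).continuous_deriv)
    (fun t ht => by simpa using (hc t ht).const_mul (morreyConst (s - 1))) fun t ht τ hτ x => by
      rw [← deriv_fun_sub ((hF τ hτ).differentiable x) ((hF t ht).differentiable x)]
      exact norm_deriv_le_mul_hsNorm hs ((hF τ hτ).sub (hF t ht)) x

theorem HsContOn.exists_hsNorm_le (hS : IsCompact S) (hF : ∀ t ∈ S, InHs s (F t))
    (hc : HsContOn s F S) : ∃ K, ∀ t ∈ S, HsNorm s (F t) ≤ K := by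
  refine hS.induction_on (p := fun A => ∃ K, ∀ t ∈ A, HsNorm s (F t) ≤ K) ⟨0, by simp⟩ ?_ ?_ ?_
  · rintro A B hAB ⟨K, hK⟩
    exact ⟨K, fun t ht => hK t (hAB ht)⟩
  · rintro A B ⟨K, hK⟩ ⟨L, hL⟩
    exact ⟨max K L, fun t ht =>
      ht.elim (fun h => le_max_of_le_left (hK t h)) fun h => le_max_of_le_right (hL t h)⟩
  · intro t ht
    refine ⟨_, inter_mem ((hc t ht).eventually_lt_const one_pos) self_mem_nhdsWithin,
      2 * (1 + HsNorm s (F t)), ?_⟩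
    rintro τ ⟨hclose : HsNorm s _ < 1, hτ⟩
    have h := hsNorm_add_le ((hF τ hτ).sub (hF t ht)) (hF t ht)
    simp only [sub_add_cancel] at h
    linarith

theorem IsHsDerivOn.hsContOn (hF : ∀ t ∈ S, InHs s (F t)) (hF' : ∀ t ∈ S, InHs s (F' t))
    (hd : IsHsDerivOn s F F' S) : HsContOn s F S := by
  intro t ht
  have hzero : Tendsto (fun τ => τ - t) (𝓝[S] t) (𝓝 0) := by
    simpa using ((continuous_sub_right t).tendsto t).mono_left nhdsWithin_le_nhds
  have hquot := hzero.eventually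
    (eventually_nhdsWithin_iff.1 ((hd t ht).eventually_lt_const one_pos))
  refine squeeze_zero' (g := fun τ => |τ - t| * (2 * (1 + HsNorm s (F' t))))
    (Eventually.of_forall fun τ => hsNorm_nonneg _ _) ?_
    (by simpa using hzero.abs.mul_const (2 * (1 + HsNorm s (F' t))))
  filter_upwards [hquot, self_mem_nhdsWithin] with τ hτquot hτ
  rcases eq_or_ne τ t with rfl | hne
  · simpa using (hsNorm_const_smul s 0 (F τ)).le
  set q : ℝ → En n := fun x => (τ - t)⁻¹ • (F τ x - F t x) - F' t x
  have hq : HsNorm s q < 1 := by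
    simpa [q, hτ, sub_ne_zero.2 hne] using hτquot
  have hsplit : (fun x => F τ x - F t x) = fun x => (τ - t) • (q x + F' t x) := by
    funext x
    simp [q, smul_inv_smul₀ (sub_ne_zero.2 hne)]
  have hqF' := hsNorm_add_le ((((hF τ hτ).sub (hF t ht)).const_smul (τ - t)⁻¹).sub (hF' t ht))
    (hF' t ht)
  rw [hsplit, hsNorm_const_smul]
  gcongr
  exact hqF'.trans (by gcongr)

theorem mem_nhdsNE_setOf_add_mem {t : ℝ} (hS : S ∈ 𝓝 t) :
    {h : ℝ | t + h ∈ S ∧ h ≠ 0} ∈ 𝓝[≠] 0 := by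
  have hadd : Tendsto (fun h => t + h) (𝓝[≠] 0) (𝓝 t) := by
    simpa using ((continuous_const_add t).tendsto 0).mono_left nhdsWithin_le_nhds
  filter_upwards [hadd hS, self_mem_nhdsWithin] with h hmem hne using ⟨hmem, hne⟩

theorem hasDerivAt_of_norm_slope_sub_le {E : Type*} [NormedAddCommGroup E] [NormedSpace ℝ E]
    {f : ℝ → E} {f' : E} {t : ℝ} {ω : ℝ → ℝ}
    (hle : ∀ᶠ h in 𝓝[≠] 0, ‖h⁻¹ • (f (t + h) - f t) - f'‖ ≤ ω h)
    (hω : Tendsto ω (𝓝[≠] 0) (𝓝 0)) : HasDerivAt f f' t := by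
  rw [hasDerivAt_iff_tendsto_slope_zero, tendsto_iff_norm_sub_tendsto_zero]
  exact squeeze_zero' (Eventually.of_forall fun _ => norm_nonneg _) hle hω

theorem IsHsDerivOn.hasDerivAt (hs : 3 / 2 < s) (hF : ∀ t ∈ S, InHs s (F t))
    (hF' : ∀ t ∈ S, InHs s (F' t)) (hd : IsHsDerivOn s F F' S) {t : ℝ} (hS : S ∈ 𝓝 t) (x : ℝ) :
    HasDerivAt (fun τ => F τ x) (F' t x) t := by
  have ht : t ∈ S := mem_of_mem_nhds hS
  have hmem := mem_nhdsNE_setOf_add_mem hS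
  have hω := ((hd t ht).mono_left (nhdsWithin_le_of_mem hmem)).const_mul (1 + morreyConst (s - 1))
  refine hasDerivAt_of_norm_slope_sub_le ?_ (by simpa using hω)
  filter_upwards [hmem] with h hh
  exact norm_le_mul_hsNorm hs ((((hF _ hh.1).sub (hF t ht)).const_smul h⁻¹).sub (hF' t ht)) x

theorem IsHsDerivOn.hasDerivAt_deriv (hs : 3 / 2 < s) (hF : ∀ t ∈ S, InHs s (F t))
    (hF' : ∀ t ∈ S, InHs s (F' t)) (hd : IsHsDerivOn s F F' S) {t : ℝ} (hS : S ∈ 𝓝 t) (x : ℝ) :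
    HasDerivAt (fun τ => deriv (F τ) x) (deriv (F' t) x) t := by
  have ht : t ∈ S := mem_of_mem_nhds hS
  have hmem := mem_nhdsNE_setOf_add_mem hS
  have hω := ((hd t ht).mono_left (nhdsWithin_le_of_mem hmem)).const_mul (morreyConst (s - 1))
  refine hasDerivAt_of_norm_slope_sub_le ?_ (by simpa using hω)
  filter_upwards [hmem] with h hh
  have hsub := (hF _ hh.1).sub (hF t ht)
  rw [← deriv_fun_sub ((hF _ hh.1).differentiable x) ((hF t ht).differentiable x),
    ← deriv_fun_const_smul _ (hsub.differentiable x),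
    ← deriv_fun_sub ((hsub.const_smul _).differentiable x) ((hF' t ht).differentiable x)]
  exact norm_deriv_le_mul_hsNorm hs ((hsub.const_smul h⁻¹).sub (hF' t ht)) x

end SobolevPath

section ChordArc

theorem eq_zero_of_apply_add_eq {α : Type*} {γ : ℝ → α} (hper : Function.Periodic γ 1)
    (hinj : InjOn γ I01) {x w : ℝ} (hw : |w| < 1) (h : γ (x + w) = γ x) : w = 0 := by
  have hfract (z : ℝ) : γ (Int.fract z) = γ z := by
    simpa using hper.sub_zsmul_eq (x := z) ⌊z⌋
  have hmem (z : ℝ) : Int.fract z ∈ I01 := ⟨Int.fract_nonneg z, Int.fract_lt_one z⟩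
  obtain ⟨k, hk⟩ := Int.fract_eq_fract.1
    (hinj (hmem (x + w)) (hmem x) (by rw [hfract, hfract, h]))
  rw [add_sub_cancel_left] at hk
  rw [hk, ← Int.cast_abs, ← Int.cast_one, Int.cast_lt, Int.abs_lt_one_iff] at hw
  rw [hk, hw, Int.cast_zero]

variable {E : Type*} [NormedAddCommGroup E] [NormedSpace ℝ E]

/-- The mean of `u'` over the segment from `x` to `x + w`: the difference quotient of `u`, continued
by `u' x` to `w = 0`. -/
def meanDeriv (u : ℝ → E) (x w : ℝ) : E := ∫ θ in (0 : ℝ)..1, deriv u (x + θ * w)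

theorem meanDeriv_zero [CompleteSpace E] (u : ℝ → E) (x : ℝ) : meanDeriv u x 0 = deriv u x := by
  simp [meanDeriv]

theorem meanDeriv_periodic {u : ℝ → E} (hu : Function.Periodic u 1) (w : ℝ) :
    Function.Periodic (fun x => meanDeriv u x w) 1 := fun x => by
  simp only [meanDeriv, add_right_comm x 1, periodic_deriv hu _]

theorem continuous_meanDeriv {T : Type*} [TopologicalSpace T] {γ : T → ℝ → E}
    (hγ : Continuous fun q : T × ℝ => deriv (γ q.1) q.2) :
    Continuous fun q : T × ℝ × ℝ => meanDeriv (γ q.1) q.2.1 q.2.2 :=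
  intervalIntegral.continuous_parametric_intervalIntegral_of_continuous'
    (f := fun (q : T × ℝ × ℝ) θ => deriv (γ q.1) (q.2.1 + θ * q.2.2))
    (hγ.comp (f := fun r : (T × ℝ × ℝ) × ℝ => (r.1.1, r.1.2.1 + r.2 * r.1.2.2)) (by fun_prop)) 0 1

theorem meanDeriv_ne_zero [CompleteSpace E] {γ : ℝ → E} (hγ : ContDiff ℝ 1 γ)
    (hper : Function.Periodic γ 1) (hinj : InjOn γ I01) (himm : ∀ x, deriv γ x ≠ 0) (x : ℝ) {w : ℝ}
    (hw : |w| < 1) : meanDeriv γ x w ≠ 0 := by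
  intro h
  have hchord := integral_deriv_comp_add_mul hγ x w
  rw [← meanDeriv, h, smul_zero, eq_comm, sub_eq_zero] at hchord
  rw [eq_zero_of_apply_add_eq hper hinj hw hchord, meanDeriv_zero] at h
  exact himm x h

/-- Quantitative embeddedness: all difference quotients of `γ` over increments of the circle, and
their limits `γ' x`, have norm at least `c`. -/
def ChordArcBound (c : ℝ) (γ : ℝ → E) : Prop := ∀ x, ∀ w ∈ symmDomain, c ≤ ‖meanDeriv γ x w‖

theorem exists_pos_chordArcBound [CompleteSpace E] {T : Type*} [TopologicalSpace T]
    [CompactSpace T] {γ : T → ℝ → E} (hcont : Continuous fun q : T × ℝ => deriv (γ q.1) q.2)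
    (hγ : ∀ t, ContDiff ℝ 1 (γ t)) (hper : ∀ t, Function.Periodic (γ t) 1)
    (hinj : ∀ t, InjOn (γ t) I01) (himm : ∀ t x, deriv (γ t) x ≠ 0) :
    ∃ c > 0, ∀ t, ChordArcBound c (γ t) := by
  have hcompact : IsCompact ((univ : Set T) ×ˢ Icc (0 : ℝ) 1 ×ˢ Icc (-(1 / 2) : ℝ) (1 / 2)) :=
    isCompact_univ.prod (isCompact_Icc.prod isCompact_Icc)
  obtain ⟨c, hc, hle⟩ := hcompact.exists_forall_le' (continuous_meanDeriv hcont).norm.continuousOn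
    (a := 0) fun q hq => norm_pos_iff.2 (meanDeriv_ne_zero (hγ q.1) (hper q.1) (hinj q.1)
      (himm q.1) q.2.1 ((abs_le.2 hq.2.2).trans_lt one_half_lt_one))
  refine ⟨c, hc, fun t x w hw => ?_⟩
  obtain ⟨y, hy, hxy : meanDeriv (γ t) x w = _⟩ :=
    (meanDeriv_periodic (hper t) w).exists_mem_Ico₀ one_pos x
  rw [hxy]
  exact hle (t, y, w) ⟨mem_univ t, Ico_subset_Icc_self hy, Ioc_subset_Icc_self hw⟩

variable [CompleteSpace E] {γ u : ℝ → E} {c M : ℝ}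

theorem ChordArcBound.le_norm_deriv (h : ChordArcBound c γ) (x : ℝ) : c ≤ ‖deriv γ x‖ :=
  meanDeriv_zero γ x ▸ h x 0 (by norm_num [symmDomain])

theorem ChordArcBound.mul_abs_le_norm_sub (h : ChordArcBound c γ) (hγ : ContDiff ℝ 1 γ) (x : ℝ)
    {w : ℝ} (hw : w ∈ symmDomain) : c * |w| ≤ ‖γ (x + w) - γ x‖ := by
  rw [← integral_deriv_comp_add_mul hγ, ← meanDeriv, norm_smul, norm_eq_abs, mul_comm]
  gcongr
  exact h x w hw

theorem ChordArcBound.norm_deriv_le_mul (h : ChordArcBound c γ) (hc : 0 < c)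
    (hM : ∀ x, ‖deriv u x‖ ≤ M) (x : ℝ) : ‖deriv u x‖ ≤ M / c * ‖deriv γ x‖ := by
  have hM₀ : 0 ≤ M := (norm_nonneg _).trans (hM x)
  calc ‖deriv u x‖ ≤ M / c * c := (hM x).trans_eq (by field_simp)
    _ ≤ M / c * ‖deriv γ x‖ := by gcongr; exact h.le_norm_deriv x

theorem exists_mem_symmDomain_eq_add_intCast (x y : ℝ) :
    ∃ w ∈ symmDomain, ∃ k : ℤ, y = x + w + k := by
  refine ⟨toIocMod one_pos (-(1 / 2)) (y - x), ?_, toIocDiv one_pos (-(1 / 2)) (y - x), ?_⟩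
  · convert toIocMod_mem_Ioc one_pos (-(1 / 2)) (y - x) using 1
    norm_num [symmDomain]
  · linarith [toIocMod_add_toIocDiv_zsmul one_pos (-(1 / 2)) (y - x),
      zsmul_one (R := ℝ) (toIocDiv one_pos (-(1 / 2)) (y - x))]

theorem ChordArcBound.norm_sub_le_mul (h : ChordArcBound c γ) (hc : 0 < c) (hγ : ContDiff ℝ 1 γ)
    (hγp : Function.Periodic γ 1) (hu : Differentiable ℝ u) (hup : Function.Periodic u 1)
    (hM : ∀ x, ‖deriv u x‖ ≤ M) (x y : ℝ) : ‖u y - u x‖ ≤ M / c * ‖γ y - γ x‖ := by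
  obtain ⟨w, hw, k, rfl⟩ := exists_mem_symmDomain_eq_add_intCast x y
  have hM₀ : 0 ≤ M := (norm_nonneg _).trans (hM x)
  have hperiod {v : ℝ → E} (hv : Function.Periodic v 1) : v (x + w + k) = v (x + w) := by
    simpa using hv.int_mul k (x + w)
  rw [hperiod hγp, hperiod hup]
  calc ‖u (x + w) - u x‖ ≤ M * |w| := by simpa using norm_sub_le_mul_abs hu hM x (x + w)
    _ = M / c * (c * |w|) := by field_simp
    _ ≤ M / c * ‖γ (x + w) - γ x‖ := by gcongr; exact h.mul_abs_le_norm_sub hγ x hw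

end ChordArc

section TwoPoint

variable {E : Type*} [NormedAddCommGroup E]

/-- The factor `|γ'(x)| |γ'(y)| / |γ(y) - γ(x)| ^ (2 s + 1)` of the tangent-point energy density, in
terms of the two-point jet of `γ`. -/
def chordWeight (s : ℝ) (p : E × E × E) : ℝ := ‖p.1‖ * ‖p.2.1‖ * ‖p.2.2‖ ^ (-(2 * s + 1))

theorem chordWeight_nonneg (s : ℝ) (p : E × E × E) : 0 ≤ chordWeight s p := by
  unfold chordWeight; positivity

variable [InnerProductSpace ℝ E]

/-- The part of `v (y) - v (x)` that `𝒟_γ v (x)` does not account for, in terms of the two-point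
jets `p` of `γ` and `q` of `v`; a jet lists the derivatives at `x` and at `y` and the chord. -/
def chordDefect (p q : E × E × E) : E := q.2.2 - ((‖p.1‖ ^ 2)⁻¹ * ⟪p.1, p.2.2⟫) • q.1

/-- The density of `‖R^s_γ v‖²_{L²(μ_γ)}` with respect to `λ ⊗ λ`, in terms of the two-point jets
`p` of `γ` and `q` of `v`; for `q = p` it is the density of the tangent-point energy. -/
def tpDensity (s : ℝ) (p q : E × E × E) : ℝ := ‖chordDefect p q‖ ^ 2 * chordWeight s p

/-- The density of `2 B¹_γ + (2 s + 1) B²_γ + B³_γ` on the diagonal `(v, v)`, in terms of the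
two-point jets `p` of `γ` and `q` of `v`. -/
def metricDensity (s : ℝ) (p q : E × E × E) : ℝ :=
  2 * tpDensity s p q + tpDensity s p p * ((2 * s + 1) * (‖q.2.2‖ ^ 2 / ‖p.2.2‖ ^ 2) +
    (‖q.1‖ ^ 2 / ‖p.1‖ ^ 2 + ‖q.2.1‖ ^ 2 / ‖p.2.1‖ ^ 2))

/-- The logarithmic derivative of `chordWeight s` at `p` in direction `q`. -/
def chordWeightLogDeriv (s : ℝ) (p q : E × E × E) : ℝ :=
  ⟪p.1, q.1⟫ / ‖p.1‖ ^ 2 + ⟪p.2.1, q.2.1⟫ / ‖p.2.1‖ ^ 2 -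
    (2 * s + 1) * (⟪p.2.2, q.2.2⟫ / ‖p.2.2‖ ^ 2)

variable {s : ℝ} {p q : E × E × E}

theorem tpDensity_nonneg (s : ℝ) (p q : E × E × E) : 0 ≤ tpDensity s p q :=
  mul_nonneg (sq_nonneg _) (chordWeight_nonneg s p)

theorem metricDensity_nonneg (hs : 0 ≤ 2 * s + 1) (p q : E × E × E) : 0 ≤ metricDensity s p q := by
  have h₁ := tpDensity_nonneg s p q
  have h₂ := tpDensity_nonneg s p p
  unfold metricDensity
  positivity

theorem tpDensity_eq_zero (hs : 2 * s + 1 ≠ 0) (hp : p.2.2 = 0) (q : E × E × E) :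
    tpDensity s p q = 0 := by
  rw [tpDensity, chordWeight, hp, norm_zero, zero_rpow (neg_ne_zero.2 hs), mul_zero, mul_zero]

theorem tpDensity_eq (hs : 2 * s + 1 ≠ 0) (p q : E × E × E) : tpDensity s p q =
    ‖(‖p.2.2‖ ^ s)⁻¹ • chordDefect p q‖ ^ 2 * (‖p.1‖ * ‖p.2.1‖ / ‖p.2.2‖) := by
  rcases eq_or_ne p.2.2 0 with hp | hp
  · rw [tpDensity_eq_zero hs hp, hp, norm_zero, div_zero, mul_zero]
  have hpos : 0 < ‖p.2.2‖ := norm_pos_iff.2 hp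
  rw [tpDensity, chordWeight, norm_smul, norm_inv, norm_of_nonneg (by positivity), rpow_neg hpos.le,
    rpow_add_one hpos.ne', mul_comm 2 s, rpow_mul hpos.le, rpow_two]
  field_simp

theorem abs_inner_div_sq_norm_le (v w : E) : |⟪v, w⟫ / ‖v‖ ^ 2| ≤ ‖w‖ / ‖v‖ := by
  rw [abs_div, abs_of_nonneg (sq_nonneg ‖v‖)]
  calc |⟪v, w⟫| / ‖v‖ ^ 2 ≤ ‖v‖ * ‖w‖ / ‖v‖ ^ 2 := by gcongr; exact abs_real_inner_le_norm v w
    _ = ‖w‖ / ‖v‖ := by field_simp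

theorem sq_weighted_sum_le {p : ℝ} (hp : 0 ≤ p) (x y z w : ℝ) :
    (2 * x + p * y + z + w) ^ 2 ≤ (4 + p) * (2 * x ^ 2 + p * y ^ 2 + z ^ 2 + w ^ 2) := by
  nlinarith [mul_nonneg hp (sq_nonneg (x - y)), sq_nonneg (x - z), sq_nonneg (x - w),
    mul_nonneg hp (sq_nonneg (y - z)), mul_nonneg hp (sq_nonneg (y - w)), sq_nonneg (z - w)]

theorem abs_chordWeightLogDeriv_le (hs : 0 ≤ 2 * s + 1) (p q : E × E × E) :
    |chordWeightLogDeriv s p q| ≤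
      (2 * s + 1) * (‖q.2.2‖ / ‖p.2.2‖) + ‖q.1‖ / ‖p.1‖ + ‖q.2.1‖ / ‖p.2.1‖ := by
  have h₁ := abs_inner_div_sq_norm_le p.1 q.1
  have h₂ := abs_inner_div_sq_norm_le p.2.1 q.2.1
  have h₃ := mul_le_mul_of_nonneg_left (abs_inner_div_sq_norm_le p.2.2 q.2.2) hs
  rw [← abs_of_nonneg hs, ← abs_mul, abs_of_nonneg hs] at h₃
  refine (abs_sub _ _).trans ?_
  linarith [abs_add_le (⟪p.1, q.1⟫ / ‖p.1‖ ^ 2) (⟪p.2.1, q.2.1⟫ / ‖p.2.1‖ ^ 2)]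

theorem abs_deriv_tpDensity_le (hs : 0 ≤ 2 * s + 1) (p q : E × E × E) :
    |2 * ⟪chordDefect p p, chordDefect p q⟫ * chordWeight s p +
        tpDensity s p p * chordWeightLogDeriv s p q| ≤
      2 * (√(tpDensity s p p) * (√(1 + (2 * s + 1) / 4) * √(metricDensity s p q))) := by
  set N := ‖chordDefect p p‖
  set M := ‖chordDefect p q‖
  set r := √(chordWeight s p)
  have hW : chordWeight s p = r ^ 2 := (sq_sqrt (chordWeight_nonneg s p)).symm
  set x := ‖q.2.2‖ / ‖p.2.2‖
  set y := ‖q.1‖ / ‖p.1‖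
  set z := ‖q.2.1‖ / ‖p.2.1‖
  have he : tpDensity s p p = (N * r) ^ 2 := by rw [tpDensity, hW, mul_pow]
  have hg : metricDensity s p q = 2 * (M * r) ^ 2 + (2 * s + 1) * (N * r * x) ^ 2 +
      (N * r * y) ^ 2 + (N * r * z) ^ 2 := by
    rw [metricDensity, he, tpDensity, hW, ← div_pow, ← div_pow, ← div_pow]
    ring
  have hCS : 2 * (M * r) + (2 * s + 1) * (N * r * x) + N * r * y + N * r * z ≤
      2 * (√(1 + (2 * s + 1) / 4) * √(metricDensity s p q)) := by
    rw [← sqrt_mul (by positivity)]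
    refine (le_sqrt_of_sq_le (sq_weighted_sum_le hs _ _ _ _)).trans_eq ?_
    rw [hg, show (4 + (2 * s + 1)) = 2 ^ 2 * (1 + (2 * s + 1) / 4) by ring, mul_assoc,
      sqrt_mul (by norm_num), sqrt_sq zero_le_two]
  have hinner : |2 * ⟪chordDefect p p, chordDefect p q⟫ * chordWeight s p| ≤
      N * r * (2 * (M * r)) := by
    rw [abs_mul, abs_mul, abs_two, abs_of_nonneg (chordWeight_nonneg s p), hW]
    nlinarith [abs_real_inner_le_norm (chordDefect p p) (chordDefect p q), sq_nonneg r]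
  calc _ ≤ N * r * (2 * (M * r)) + (N * r) ^ 2 * ((2 * s + 1) * x + y + z) := by
        refine (abs_add_le _ _).trans (add_le_add hinner ?_)
        rw [he, abs_mul, abs_of_nonneg (sq_nonneg _)]
        gcongr
        exact abs_chordWeightLogDeriv_le hs p q
    _ = N * r * (2 * (M * r) + (2 * s + 1) * (N * r * x) + N * r * y + N * r * z) := by ring
    _ ≤ N * r * (2 * (√(1 + (2 * s + 1) / 4) * √(metricDensity s p q))) := by gcongr
    _ = _ := by rw [he, sqrt_sq (by positivity)]; ring

theorem hasDerivAt_norm_comp_rpow (r : ℝ) {f : ℝ → E} {f' : E} {t : ℝ} (hf : HasDerivAt f f' t)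
    (hne : f t ≠ 0) :
    HasDerivAt (fun τ => ‖f τ‖ ^ r) (‖f t‖ ^ r * (r * (⟪f t, f'⟫ / ‖f t‖ ^ 2))) t := by
  have : 0 < ‖f t‖ := norm_pos_iff.2 hne
  have hsq (v : E) : (‖v‖ ^ 2) ^ (r / 2) = ‖v‖ ^ r := by
    rw [← rpow_natCast_mul (norm_nonneg v)]; norm_num [mul_div_cancel₀]
  have h := (hf.norm_sq.rpow_const (p := r / 2) (Or.inl (by positivity)))
  simp only [hsq] at h
  convert h using 1
  rw [rpow_sub_one (by positivity), hsq]
  ring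

variable {J : ℝ → E × E × E} {t : ℝ}

theorem inner_chordDefect_self (p : E × E × E) : ⟪chordDefect p p, p.1⟫ = 0 := by
  rcases eq_or_ne p.1 0 with hp | hp
  · rw [hp, inner_zero_right]
  rw [chordDefect, inner_sub_left, real_inner_smul_left, real_inner_self_eq_norm_sq,
    real_inner_comm p.1]
  field_simp [norm_ne_zero_iff.2 hp]
  ring

theorem hasDerivAt_sq_norm_chordDefect (hJ : HasDerivAt J q t) (hne : (J t).1 ≠ 0) :
    HasDerivAt (fun τ => ‖chordDefect (J τ) (J τ)‖ ^ 2)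
      (2 * ⟪chordDefect (J t) (J t), chordDefect (J t) q⟫) t := by
  have ha : HasDerivAt (fun τ => (J τ).1) q.1 t := hJ.fst
  have hd : HasDerivAt (fun τ => (J τ).2.2) q.2.2 t := hJ.snd.snd
  have hcoeff := (ha.norm_sq.fun_inv (by simpa using hne)).fun_mul (ha.inner ℝ hd)
  refine (hd.fun_sub (hcoeff.fun_smul ha)).norm_sq.congr_deriv ?_
  -- The derivative of the coefficient multiplies `(J t).1`, which the defect is orthogonal to.
  rw [← sub_sub, inner_sub_right, real_inner_smul_right _ (J t).1, ← chordDefect,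
    inner_chordDefect_self, mul_zero, sub_zero, ← chordDefect]

theorem hasDerivAt_chordWeight (hJ : HasDerivAt J q t) (h₁ : (J t).1 ≠ 0) (h₂ : (J t).2.1 ≠ 0)
    (h₃ : (J t).2.2 ≠ 0) : HasDerivAt (fun τ => chordWeight s (J τ))
      (chordWeight s (J t) * chordWeightLogDeriv s (J t) q) t := by
  have ha : HasDerivAt (fun τ => (J τ).1) q.1 t := hJ.fst
  have hb : HasDerivAt (fun τ => (J τ).2.1) q.2.1 t := hJ.snd.fst
  have hd : HasDerivAt (fun τ => (J τ).2.2) q.2.2 t := hJ.snd.snd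
  have ha' := hasDerivAt_norm_comp_rpow 1 ha h₁
  have hb' := hasDerivAt_norm_comp_rpow 1 hb h₂
  simp only [rpow_one] at ha' hb'
  refine ((ha'.fun_mul hb').fun_mul (hasDerivAt_norm_comp_rpow (-(2 * s + 1)) hd h₃)).congr_deriv ?_
  simp only [chordWeight, chordWeightLogDeriv]
  ring

theorem hasDerivAt_tpDensity (hJ : HasDerivAt J q t) (h₁ : (J t).1 ≠ 0) (h₂ : (J t).2.1 ≠ 0)
    (h₃ : (J t).2.2 ≠ 0) : HasDerivAt (fun τ => tpDensity s (J τ) (J τ))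
      (2 * ⟪chordDefect (J t) (J t), chordDefect (J t) q⟫ * chordWeight s (J t) +
        tpDensity s (J t) (J t) * chordWeightLogDeriv s (J t) q) t := by
  refine ((hasDerivAt_sq_norm_chordDefect hJ h₁).mul
    (hasDerivAt_chordWeight hJ h₁ h₂ h₃)).congr_deriv ?_
  rw [tpDensity]
  ring

section Regularity

variable {X : Type*} [TopologicalSpace X] {S : Set X} {J Q : X → E × E × E}

theorem continuousOn_tpDensity (hJ : ContinuousOn J S) (hQ : ContinuousOn Q S)
    (h₁ : ∀ x ∈ S, (J x).1 ≠ 0) (h₃ : ∀ x ∈ S, (J x).2.2 ≠ 0) :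
    ContinuousOn (fun x => tpDensity s (J x) (Q x)) S := by
  have hd : ContinuousOn (fun x => ‖(J x).2.2‖ ^ (-(2 * s + 1))) S :=
    hJ.snd.snd.norm.rpow_const fun x hx => Or.inl (norm_ne_zero_iff.2 (h₃ x hx))
  have ha : ContinuousOn (fun x => (‖(J x).1‖ ^ 2)⁻¹) S :=
    (hJ.fst.norm.pow 2).inv₀ fun x hx => pow_ne_zero 2 (norm_ne_zero_iff.2 (h₁ x hx))
  unfold tpDensity chordDefect chordWeight
  fun_prop

theorem continuousOn_metricDensity (hJ : ContinuousOn J S) (hQ : ContinuousOn Q S)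
    (h₁ : ∀ x ∈ S, (J x).1 ≠ 0) (h₂ : ∀ x ∈ S, (J x).2.1 ≠ 0) (h₃ : ∀ x ∈ S, (J x).2.2 ≠ 0) :
    ContinuousOn (fun x => metricDensity s (J x) (Q x)) S := by
  have hJQ := continuousOn_tpDensity (s := s) hJ hQ h₁ h₃
  have hJJ := continuousOn_tpDensity (s := s) hJ hJ h₁ h₃
  have hdiv {f g : X → E} (hf : ContinuousOn f S) (hg : ContinuousOn g S)
      (hne : ∀ x ∈ S, g x ≠ 0) : ContinuousOn (fun x => ‖f x‖ ^ 2 / ‖g x‖ ^ 2) S :=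
    (hf.norm.pow 2).div (hg.norm.pow 2) fun x hx => pow_ne_zero 2 (norm_ne_zero_iff.2 (hne x hx))
  have := hdiv hQ.fst hJ.fst h₁
  have := hdiv hQ.snd.fst hJ.snd.fst h₂
  have hd := hdiv hQ.snd.snd hJ.snd.snd h₃
  unfold metricDensity
  fun_prop

variable [MeasurableSpace E] [BorelSpace E] [SecondCountableTopology E]
  {Y : Type*} [MeasurableSpace Y] {J Q : Y → E × E × E}

theorem measurable_tpDensity (s : ℝ) (hJ : Measurable J) (hQ : Measurable Q) :
    Measurable fun y => tpDensity s (J y) (Q y) := by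
  unfold tpDensity chordDefect chordWeight
  fun_prop

theorem measurable_metricDensity (s : ℝ) (hJ : Measurable J) (hQ : Measurable Q) :
    Measurable fun y => metricDensity s (J y) (Q y) := by
  have hJQ := measurable_tpDensity s hJ hQ
  have hJJ := measurable_tpDensity s hJ hJ
  unfold metricDensity
  fun_prop

end Regularity

end TwoPoint

section JetEstimates

variable {E : Type*} [NormedAddCommGroup E] [InnerProductSpace ℝ E] {s c K L : ℝ}

theorem metricDensity_le (hs : 0 ≤ 2 * s + 1) {p q : E × E × E} (h₁ : ‖q.1‖ ≤ L * ‖p.1‖)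
    (h₂ : ‖q.2.1‖ ≤ L * ‖p.2.1‖) (h₃ : ‖q.2.2‖ ≤ L * ‖p.2.2‖) :
    metricDensity s p q ≤ 2 * tpDensity s p q + (2 * s + 3) * L ^ 2 * tpDensity s p p := by
  have hquot {v w : E} (h : ‖w‖ ≤ L * ‖v‖) : ‖w‖ ^ 2 / ‖v‖ ^ 2 ≤ L ^ 2 :=
    div_le_of_le_mul₀ (sq_nonneg _) (sq_nonneg _) (by rw [← mul_pow]; gcongr)
  have hp := tpDensity_nonneg s p p
  calc metricDensity s p q
      ≤ 2 * tpDensity s p q + tpDensity s p p * ((2 * s + 1) * L ^ 2 + (L ^ 2 + L ^ 2)) := by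
        unfold metricDensity
        gcongr <;> exact hquot ‹_›
    _ = _ := by ring

/-- The two-point jet of `u` at `z = (x, y)`: its derivatives at `x` and at `y`, and its chord. -/
def twoPointJet (u : ℝ → E) (z : ℝ × ℝ) : E × E × E :=
  (deriv u z.1, deriv u z.2, u z.2 - u z.1)

theorem continuous_twoPointJet {u : ℝ → E} (hu : ContDiff ℝ 1 u) : Continuous (twoPointJet u) := by
  have h₀ := hu.continuous
  have := hu.continuous_deriv le_rfl
  unfold twoPointJet
  fun_prop

theorem twoPointJet_add_one {u : ℝ → E} (hu : Function.Periodic u 1) (x y : ℝ) :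
    twoPointJet u (x, y + 1) = twoPointJet u (x, y) := by
  simp only [twoPointJet, hu y, periodic_deriv hu y]

variable {γ u : ℝ → E} {x w : ℝ}

theorem sq_norm_chordDefect_twoPointJet_le (hne : deriv γ x ≠ 0)
    (hL : ‖deriv u x‖ ≤ L * ‖deriv γ x‖) (w : ℝ) :
    ‖chordDefect (twoPointJet γ (x, x + w)) (twoPointJet u (x, x + w))‖ ^ 2 ≤
      2 * (‖taylorRemainder u x w‖ ^ 2 + L ^ 2 * ‖taylorRemainder γ x w‖ ^ 2) := by
  set κ := ⟪deriv γ x, taylorRemainder γ x w⟫ / ‖deriv γ x‖ ^ 2 with hκ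
  have : 0 < ‖deriv γ x‖ := norm_pos_iff.2 hne
  have hdefect : chordDefect (twoPointJet γ (x, x + w)) (twoPointJet u (x, x + w)) =
      taylorRemainder u x w - κ • deriv u x := by
    have hγw : γ (x + w) - γ x = taylorRemainder γ x w + w • deriv γ x := by
      simp [taylorRemainder]
    have hcoeff : (‖deriv γ x‖ ^ 2)⁻¹ * ⟪deriv γ x, γ (x + w) - γ x⟫ = κ + w := by
      rw [hγw, inner_add_right, real_inner_smul_right, real_inner_self_eq_norm_sq, hκ]
      field_simp
    simp only [chordDefect, twoPointJet, hcoeff, taylorRemainder]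
    module
  have hκu : ‖κ • deriv u x‖ ≤ L * ‖taylorRemainder γ x w‖ := by
    calc ‖κ • deriv u x‖ ≤ ‖taylorRemainder γ x w‖ / ‖deriv γ x‖ * (L * ‖deriv γ x‖) := by
          rw [norm_smul, norm_eq_abs]
          gcongr
          exact abs_inner_div_sq_norm_le _ _
      _ = L * ‖taylorRemainder γ x w‖ := by field_simp
  calc _ ≤ (‖taylorRemainder u x w‖ + L * ‖taylorRemainder γ x w‖) ^ 2 := by
        rw [hdefect]
        gcongr
        exact (norm_sub_le _ _).trans (by gcongr)
    _ ≤ _ := by rw [← mul_pow]; exact add_sq_le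

theorem chordWeight_twoPointJet_le (hs : 0 < 2 * s + 1) (hc : 0 < c) (hK : ∀ x, ‖deriv γ x‖ ≤ K)
    (hchord : c * |w| ≤ ‖γ (x + w) - γ x‖) :
    chordWeight s (twoPointJet γ (x, x + w)) ≤ K ^ 2 / c ^ (2 * s + 1) / |w| ^ (2 * s + 1) := by
  have hK₀ : 0 ≤ K := (norm_nonneg _).trans (hK 0)
  rcases eq_or_ne w 0 with rfl | hw
  · rw [chordWeight, twoPointJet, add_zero, sub_self, norm_zero, zero_rpow (neg_ne_zero.2 hs.ne'),
      mul_zero]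
    positivity
  have hw' : 0 < |w| := abs_pos.2 hw
  have hpow : ‖γ (x + w) - γ x‖ ^ (-(2 * s + 1)) ≤ (c * |w|) ^ (-(2 * s + 1)) :=
    rpow_le_rpow_of_nonpos (by positivity) hchord (by linarith)
  calc chordWeight s (twoPointJet γ (x, x + w))
      ≤ K * K * (c * |w|) ^ (-(2 * s + 1)) := by
        exact mul_le_mul (mul_le_mul (hK x) (hK (x + w)) (norm_nonneg _) hK₀) hpow (by positivity)
          (by positivity)
    _ = K ^ 2 / c ^ (2 * s + 1) / |w| ^ (2 * s + 1) := by
        rw [rpow_neg (by positivity), mul_rpow hc.le hw'.le]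
        field_simp

theorem tpDensity_twoPointJet_le [CompleteSpace E] (hs : 0 < 2 * s + 1) (hγ : ContDiff ℝ 1 γ)
    (hc : 0 < c) (hchord : ChordArcBound c γ) (hK : ∀ x, ‖deriv γ x‖ ≤ K)
    (hL : ∀ x, ‖deriv u x‖ ≤ L * ‖deriv γ x‖) (x : ℝ) (hw : w ∈ symmDomain) :
    tpDensity s (twoPointJet γ (x, x + w)) (twoPointJet u (x, x + w)) ≤
      2 * (K ^ 2 / c ^ (2 * s + 1)) * (‖taylorRemainder u x w‖ ^ 2 / |w| ^ (2 * s + 1) +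
        L ^ 2 * (‖taylorRemainder γ x w‖ ^ 2 / |w| ^ (2 * s + 1))) := by
  have hne : deriv γ x ≠ 0 := norm_pos_iff.1 (hc.trans_le (hchord.le_norm_deriv x))
  calc _ ≤ 2 * (‖taylorRemainder u x w‖ ^ 2 + L ^ 2 * ‖taylorRemainder γ x w‖ ^ 2) *
        (K ^ 2 / c ^ (2 * s + 1) / |w| ^ (2 * s + 1)) :=
        mul_le_mul (sq_norm_chordDefect_twoPointJet_le hne (hL x) w)
          (chordWeight_twoPointJet_le hs hc hK (hchord.mul_abs_le_norm_sub hγ x hw))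
          (chordWeight_nonneg _ _) (by positivity)
    _ = _ := by ring

theorem measurable_sq_norm_taylorRemainder_div (hu : ContDiff ℝ 1 u) (r : ℝ) :
    Measurable fun q : ℝ × ℝ =>
      ENNReal.ofReal (‖taylorRemainder u q.1 q.2‖ ^ 2 / |q.2| ^ r) := by
  have hu₀ := hu.continuous
  have := hu.continuous_deriv le_rfl
  have hnum : Continuous fun q : ℝ × ℝ => ‖taylorRemainder u q.1 q.2‖ ^ 2 := by
    unfold taylorRemainder
    fun_prop
  exact (hnum.measurable.div (measurable_snd.abs.pow_const _)).ennreal_ofReal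

theorem lintegral_tpDensity_twoPointJet_le [CompleteSpace E] (hs : 1 ≤ s) (hγ : ContDiff ℝ 1 γ)
    (hγp : Function.Periodic γ 1) (hu : ContDiff ℝ 1 u) (hup : Function.Periodic u 1) (hc : 0 < c)
    (hchord : ChordArcBound c γ) (hK : ∀ x, ‖deriv γ x‖ ≤ K)
    (hL : ∀ x, ‖deriv u x‖ ≤ L * ‖deriv γ x‖) :
    ∫⁻ x in I01, ∫⁻ y in I01,
        ENNReal.ofReal (tpDensity s (twoPointJet γ (x, y)) (twoPointJet u (x, y))) ≤
      ENNReal.ofReal (2 * (K ^ 2 / c ^ (2 * s + 1))) * (gagliardoSqE (s - 1) (deriv u) +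
        ENNReal.ofReal (L ^ 2) * gagliardoSqE (s - 1) (deriv γ)) := by
  have hmeas := measurable_sq_norm_taylorRemainder_div hu (2 * s + 1)
  have hgag {v : ℝ → E} (hv : ContDiff ℝ 1 v) (hvp : Function.Periodic v 1) :
      ∫⁻ x in I01, ∫⁻ w in symmDomain,
          ENNReal.ofReal (‖taylorRemainder v x w‖ ^ 2 / |w| ^ (2 * s + 1)) ≤
        gagliardoSqE (s - 1) (deriv v) := by
    have h := lintegral_taylorRemainder_le_gagliardoSqE (sub_nonneg.2 hs) hv (periodic_deriv hvp)
    rwa [show 2 * (s - 1) + 3 = 2 * s + 1 by ring] at h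
  set A := 2 * (K ^ 2 / c ^ (2 * s + 1))
  set F := fun (v : ℝ → E) (x w : ℝ) =>
    ENNReal.ofReal (‖taylorRemainder v x w‖ ^ 2 / |w| ^ (2 * s + 1))
  calc _ ≤ ∫⁻ x in I01, ∫⁻ w in symmDomain,
          ENNReal.ofReal A * (F u x w + ENNReal.ofReal (L ^ 2) * F γ x w) := by
        refine lintegral_mono fun x => ?_
        rw [lintegral_I01_eq_lintegral_symmDomain _ x]
        · refine setLIntegral_mono' measurableSet_symmDomain fun w hw => ?_
          rw [← ENNReal.ofReal_mul (by positivity), ← ENNReal.ofReal_add (by positivity)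
            (by positivity), ← ENNReal.ofReal_mul (by positivity)]
          exact ENNReal.ofReal_le_ofReal
            (tpDensity_twoPointJet_le (by linarith) hγ hc hchord hK hL x hw)
        · exact fun y => by rw [twoPointJet_add_one hγp, twoPointJet_add_one hup]
    _ = ENNReal.ofReal A * ((∫⁻ x in I01, ∫⁻ w in symmDomain, F u x w) +
          ENNReal.ofReal (L ^ 2) * ∫⁻ x in I01, ∫⁻ w in symmDomain, F γ x w) := by
        simp only [lintegral_const_mul' _ _ ENNReal.ofReal_ne_top,
          lintegral_add_left (f := F u _) hmeas.of_uncurry_left]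
        rw [lintegral_add_left hmeas.lintegral_prod_right',
          lintegral_const_mul' _ _ ENNReal.ofReal_ne_top]
    _ ≤ _ := by gcongr; exacts [hgag hu hup, hgag hγ hγp]

variable [SecondCountableTopology E]

theorem measurable_tpDensity_twoPointJet (s : ℝ) (hγ : ContDiff ℝ 1 γ) (hu : ContDiff ℝ 1 u) :
    Measurable fun z => tpDensity s (twoPointJet γ z) (twoPointJet u z) := by
  borelize E
  exact measurable_tpDensity s (continuous_twoPointJet hγ).measurable
    (continuous_twoPointJet hu).measurable

theorem measurable_metricDensity_twoPointJet (s : ℝ) (hγ : ContDiff ℝ 1 γ)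
    (hu : ContDiff ℝ 1 u) :
    Measurable fun z => metricDensity s (twoPointJet γ z) (twoPointJet u z) := by
  borelize E
  exact measurable_metricDensity s (continuous_twoPointJet hγ).measurable
    (continuous_twoPointJet hu).measurable

end JetEstimates

section Integrals

variable {n : ℕ} {s c K M : ℝ} {γ u : ℝ → En n}

/-- Lebesgue measure on `𝕋 × 𝕋`, carried by a fundamental domain. -/
abbrev torusMeasure : Measure (ℝ × ℝ) := (volume.restrict I01).prod (volume.restrict I01)

theorem sq_norm_Rop_mul_muW (hs : 2 * s + 1 ≠ 0) (γ u : ℝ → En n) (x y : ℝ) :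
    ‖Rop s γ u x y‖ ^ 2 * muW γ x y =
      tpDensity s (twoPointJet γ (x, y)) (twoPointJet u (x, y)) := by
  rw [tpDensity_eq hs]
  rfl

theorem inner_Dg_self (γ u : ℝ → En n) (x : ℝ) :
    ⟪Dg γ u x, Dg γ u x⟫ = ‖deriv u x‖ ^ 2 / ‖deriv γ x‖ ^ 2 := by
  rw [Dg, real_inner_self_eq_norm_sq, norm_smul, norm_inv, norm_norm, mul_pow, inv_pow,
    inv_mul_eq_div]

theorem Etp_eq_integral_tpDensity (hs : 2 * s + 1 ≠ 0) (hγ : ContDiff ℝ 1 γ) :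
    Etp s γ = ∫ z, tpDensity s (twoPointJet γ z) (twoPointJet γ z) ∂torusMeasure := by
  have hmeas := measurable_tpDensity_twoPointJet s hγ hγ
  rw [integral_eq_lintegral_of_nonneg_ae (Eventually.of_forall fun _ => tpDensity_nonneg _ _ _)
    hmeas.aestronglyMeasurable, lintegral_prod _ hmeas.ennreal_ofReal.aemeasurable]
  simp only [Etp, EtpE, sq_norm_Rop_mul_muW hs]

/-- The data over which the estimates on the energy and on the metric are uniform: a curve `γ` with
chord-arc constant `c` and `H^s` norm at most `K`, and a field `u` along it with `H^s` norm at most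
`M`. -/
structure BoundedTangent (s c K M : ℝ) (γ u : ℝ → En n) : Prop where
  pos : 0 < c
  chordArc : ChordArcBound c γ
  curve : InHs s γ
  field : InHs s u
  curve_le : HsNorm s γ ≤ K
  field_le : HsNorm s u ≤ M

/-- The Lipschitz constant, relative to the curve, of a field in `BoundedTangent s c K M`. -/
def tangentLip (s c M : ℝ) : ℝ := morreyConst (s - 1) * M / c

/-- The bound on `‖R^s_γ u‖²_{L²(μ_γ)}` over `BoundedTangent s c K M`. -/
def tpBound (s c K M : ℝ) : ℝ :=
  2 * ((morreyConst (s - 1) * K) ^ 2 / c ^ (2 * s + 1)) * (M ^ 2 + tangentLip s c M ^ 2 * K ^ 2)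

/-- The bound on `2 B¹_γ + (2 s + 1) B²_γ + B³_γ` over `BoundedTangent s c K M`. -/
def metricBound (s c K M : ℝ) : ℝ :=
  2 * tpBound s c K M + (2 * s + 3) * tangentLip s c M ^ 2 * tpBound s c K K

namespace BoundedTangent

theorem self (h : BoundedTangent s c K M γ u) : BoundedTangent s c K K γ γ :=
  ⟨h.pos, h.chordArc, h.curve, h.curve, h.curve_le, h.curve_le⟩

theorem norm_deriv_le (h : BoundedTangent s c K M γ u) (hs : 3 / 2 < s) (x : ℝ) :
    ‖deriv u x‖ ≤ morreyConst (s - 1) * M :=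
  (norm_deriv_le_mul_hsNorm hs h.field x).trans
    (mul_le_mul_of_nonneg_left h.field_le (morreyConst_nonneg (by linarith)))

theorem norm_deriv_le_mul (h : BoundedTangent s c K M γ u) (hs : 3 / 2 < s) (x : ℝ) :
    ‖deriv u x‖ ≤ tangentLip s c M * ‖deriv γ x‖ :=
  h.chordArc.norm_deriv_le_mul h.pos (h.norm_deriv_le hs) x

theorem norm_sub_le_mul (h : BoundedTangent s c K M γ u) (hs : 3 / 2 < s) (x y : ℝ) :
    ‖u y - u x‖ ≤ tangentLip s c M * ‖γ y - γ x‖ :=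
  h.chordArc.norm_sub_le_mul h.pos h.curve.2.1 h.curve.1 h.field.differentiable h.field.1
    (h.norm_deriv_le hs) x y

theorem lintegral_tpDensity_le (h : BoundedTangent s c K M γ u) (hs : 3 / 2 < s) :
    ∫⁻ z, ENNReal.ofReal (tpDensity s (twoPointJet γ z) (twoPointJet u z)) ∂torusMeasure ≤
      ENNReal.ofReal (tpBound s c K M) := by
  have hc := h.pos
  have hgag {v : ℝ → En n} {R : ℝ} (hv : InHs s v) (hR : HsNorm s v ≤ R) :
      gagliardoSqE (s - 1) (deriv v) ≤ ENNReal.ofReal (R ^ 2) :=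
    (gagliardoSqE_deriv_le hv).trans
      (ENNReal.ofReal_le_ofReal (pow_le_pow_left₀ (hsNorm_nonneg s v) hR 2))
  have hmeas := measurable_tpDensity_twoPointJet s h.curve.2.1 h.field.2.1
  rw [lintegral_prod _ hmeas.ennreal_ofReal.aemeasurable, tpBound,
    ENNReal.ofReal_mul (by positivity), ENNReal.ofReal_add (by positivity) (by positivity),
    ENNReal.ofReal_mul (sq_nonneg (tangentLip s c M))]
  refine (lintegral_tpDensity_twoPointJet_le (by linarith) h.curve.2.1 h.curve.1 h.field.2.1
    h.field.1 hc h.chordArc (h.self.norm_deriv_le hs) (h.norm_deriv_le_mul hs)).trans ?_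
  gcongr
  exacts [hgag h.field h.field_le, hgag h.curve h.curve_le]

theorem integrable_tpDensity (h : BoundedTangent s c K M γ u) (hs : 3 / 2 < s) :
    Integrable (fun z => tpDensity s (twoPointJet γ z) (twoPointJet u z)) torusMeasure :=
  (lintegral_ofReal_ne_top_iff_integrable
    (measurable_tpDensity_twoPointJet s h.curve.2.1 h.field.2.1).aestronglyMeasurable
    (Eventually.of_forall fun _ => tpDensity_nonneg _ _ _)).1
    ((h.lintegral_tpDensity_le hs).trans_lt ENNReal.ofReal_lt_top).ne

theorem integral_tpDensity_le (h : BoundedTangent s c K M γ u) (hs : 3 / 2 < s) :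
    ∫ z, tpDensity s (twoPointJet γ z) (twoPointJet u z) ∂torusMeasure ≤ tpBound s c K M := by
  have hc := h.pos
  rw [← ENNReal.ofReal_le_ofReal_iff (by unfold tpBound; positivity),
    ofReal_integral_eq_lintegral_ofReal (h.integrable_tpDensity hs)
      (Eventually.of_forall fun _ => tpDensity_nonneg _ _ _)]
  exact h.lintegral_tpDensity_le hs

theorem metricDensity_le (h : BoundedTangent s c K M γ u) (hs : 3 / 2 < s) (z : ℝ × ℝ) :
    metricDensity s (twoPointJet γ z) (twoPointJet u z) ≤
      2 * tpDensity s (twoPointJet γ z) (twoPointJet u z) + (2 * s + 3) * tangentLip s c M ^ 2 *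
        tpDensity s (twoPointJet γ z) (twoPointJet γ z) :=
  _root_.metricDensity_le (by linarith) (h.norm_deriv_le_mul hs z.1) (h.norm_deriv_le_mul hs z.2)
    (h.norm_sub_le_mul hs z.1 z.2)

theorem integrable_metricDensity (h : BoundedTangent s c K M γ u) (hs : 3 / 2 < s) :
    Integrable (fun z => metricDensity s (twoPointJet γ z) (twoPointJet u z)) torusMeasure := by
  refine (((h.integrable_tpDensity hs).const_mul 2).add
    ((h.self.integrable_tpDensity hs).const_mul ((2 * s + 3) * tangentLip s c M ^ 2))).mono'
    (measurable_metricDensity_twoPointJet s h.curve.2.1 h.field.2.1).aestronglyMeasurable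
    (Eventually.of_forall fun z => ?_)
  rw [norm_of_nonneg (metricDensity_nonneg (by linarith) _ _)]
  exact h.metricDensity_le hs z

theorem integral_metricDensity_le (h : BoundedTangent s c K M γ u) (hs : 3 / 2 < s) :
    ∫ z, metricDensity s (twoPointJet γ z) (twoPointJet u z) ∂torusMeasure ≤
      metricBound s c K M := by
  have hu := (h.integrable_tpDensity hs).const_mul 2
  have hγ := (h.self.integrable_tpDensity hs).const_mul ((2 * s + 3) * tangentLip s c M ^ 2)
  refine (integral_mono (h.integrable_metricDensity hs) (hu.add hγ)
    fun z => h.metricDensity_le hs z).trans ?_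
  have : 0 ≤ 2 * s + 3 := by linarith
  simp only [Pi.add_apply]
  rw [integral_add hu hγ, integral_const_mul, integral_const_mul, metricBound]
  gcongr
  exacts [h.integral_tpDensity_le hs, h.self.integral_tpDensity_le hs]

end BoundedTangent

end Integrals

section Metric

variable {n : ℕ} {s c K M : ℝ} {γ u : ℝ → En n}

theorem tpDensity_mul_chord_le_metricDensity {E : Type*} [NormedAddCommGroup E]
    [InnerProductSpace ℝ E] (hs : 0 ≤ s) (p q : E × E × E) :
    tpDensity s p p * (‖q.2.2‖ ^ 2 / ‖p.2.2‖ ^ 2) ≤ metricDensity s p q := by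
  have hp := tpDensity_nonneg s p p
  have hq := tpDensity_nonneg s p q
  have hchord : 0 ≤ tpDensity s p p * (2 * s * (‖q.2.2‖ ^ 2 / ‖p.2.2‖ ^ 2) +
    (‖q.1‖ ^ 2 / ‖p.1‖ ^ 2 + ‖q.2.1‖ ^ 2 / ‖p.2.1‖ ^ 2)) := by positivity
  rw [metricDensity]
  linarith

theorem tpDensity_mul_deriv_le_metricDensity {E : Type*} [NormedAddCommGroup E]
    [InnerProductSpace ℝ E] (hs : 0 ≤ 2 * s + 1) (p q : E × E × E) :
    tpDensity s p p * (‖q.1‖ ^ 2 / ‖p.1‖ ^ 2 + ‖q.2.1‖ ^ 2 / ‖p.2.1‖ ^ 2) ≤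
      metricDensity s p q := by
  have hp := tpDensity_nonneg s p p
  have hq := tpDensity_nonneg s p q
  have hchord : 0 ≤ tpDensity s p p * ((2 * s + 1) * (‖q.2.2‖ ^ 2 / ‖p.2.2‖ ^ 2)) := by positivity
  rw [metricDensity]
  linarith

theorem B1_self_eq (hs : 2 * s + 1 ≠ 0)
    (hI : Integrable (fun z => tpDensity s (twoPointJet γ z) (twoPointJet u z)) torusMeasure) :
    B1 s γ u u = ∫ z, tpDensity s (twoPointJet γ z) (twoPointJet u z) ∂torusMeasure := by
  simp only [B1, real_inner_self_eq_norm_sq, sq_norm_Rop_mul_muW hs]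
  exact (integral_prod _ hI).symm

theorem B2_self_eq (hs : 2 * s + 1 ≠ 0)
    (hI : Integrable (fun z => tpDensity s (twoPointJet γ z) (twoPointJet γ z) *
      (‖(twoPointJet u z).2.2‖ ^ 2 / ‖(twoPointJet γ z).2.2‖ ^ 2)) torusMeasure) :
    B2 s γ u u = ∫ z, tpDensity s (twoPointJet γ z) (twoPointJet γ z) *
      (‖(twoPointJet u z).2.2‖ ^ 2 / ‖(twoPointJet γ z).2.2‖ ^ 2) ∂torusMeasure := by
  simp only [B2, real_inner_self_eq_norm_sq, mul_right_comm _ (_ / _) (muW _ _ _),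
    sq_norm_Rop_mul_muW hs]
  exact (integral_prod _ hI).symm

theorem B3_self_eq (hs : 2 * s + 1 ≠ 0)
    (hI : Integrable (fun z => tpDensity s (twoPointJet γ z) (twoPointJet γ z) *
      (‖(twoPointJet u z).1‖ ^ 2 / ‖(twoPointJet γ z).1‖ ^ 2 +
        ‖(twoPointJet u z).2.1‖ ^ 2 / ‖(twoPointJet γ z).2.1‖ ^ 2)) torusMeasure) :
    B3 s γ u u = ∫ z, tpDensity s (twoPointJet γ z) (twoPointJet γ z) *
      (‖(twoPointJet u z).1‖ ^ 2 / ‖(twoPointJet γ z).1‖ ^ 2 +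
        ‖(twoPointJet u z).2.1‖ ^ 2 / ‖(twoPointJet γ z).2.1‖ ^ 2) ∂torusMeasure := by
  simp only [B3, inner_Dg_self, mul_right_comm _ (_ + _) (muW _ _ _), sq_norm_Rop_mul_muW hs]
  exact (integral_prod _ hI).symm

namespace BoundedTangent

theorem integrable_tpDensity_mul (h : BoundedTangent s c K M γ u) (hs : 3 / 2 < s)
    {f : ℝ × ℝ → ℝ} (hf : Measurable f) (hf₀ : ∀ z, 0 ≤ f z)
    (hle : ∀ z, tpDensity s (twoPointJet γ z) (twoPointJet γ z) * f z ≤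
      metricDensity s (twoPointJet γ z) (twoPointJet u z)) :
    Integrable (fun z => tpDensity s (twoPointJet γ z) (twoPointJet γ z) * f z) torusMeasure := by
  refine (h.integrable_metricDensity hs).mono'
    ((measurable_tpDensity_twoPointJet s h.curve.2.1 h.curve.2.1).mul hf).aestronglyMeasurable
    (Eventually.of_forall fun z => ?_)
  rw [norm_of_nonneg (mul_nonneg (tpDensity_nonneg _ _ _) (hf₀ z))]
  exact hle z

theorem Gmet_self_eq (h : BoundedTangent s c K M γ u) (hs : 3 / 2 < s) : Gmet s γ u u =
    ∫ z, metricDensity s (twoPointJet γ z) (twoPointJet u z) ∂torusMeasure +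
      innerH1g γ u u + innerL2g γ u u := by
  have hs' : 2 * s + 1 ≠ 0 := by linarith
  have hjγ := (continuous_twoPointJet h.curve.2.1).measurable
  have hju := (continuous_twoPointJet h.field.2.1).measurable
  have hI₁ := h.integrable_tpDensity hs
  have hI₂ := h.integrable_tpDensity_mul hs
    (f := fun z => ‖(twoPointJet u z).2.2‖ ^ 2 / ‖(twoPointJet γ z).2.2‖ ^ 2)
    ((hju.snd.snd.norm.pow_const 2).div (hjγ.snd.snd.norm.pow_const 2))
    (fun z => by positivity) fun z => tpDensity_mul_chord_le_metricDensity (by linarith) _ _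
  have hI₃ := h.integrable_tpDensity_mul hs
    (f := fun z => ‖(twoPointJet u z).1‖ ^ 2 / ‖(twoPointJet γ z).1‖ ^ 2 +
      ‖(twoPointJet u z).2.1‖ ^ 2 / ‖(twoPointJet γ z).2.1‖ ^ 2)
    (((hju.fst.norm.pow_const 2).div (hjγ.fst.norm.pow_const 2)).add
      ((hju.snd.fst.norm.pow_const 2).div (hjγ.snd.fst.norm.pow_const 2)))
    (fun z => by positivity) fun z => tpDensity_mul_deriv_le_metricDensity (by linarith) _ _
  rw [Gmet, B1_self_eq hs' hI₁, B2_self_eq hs' hI₂, B3_self_eq hs' hI₃, ← integral_const_mul,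
    ← integral_const_mul, ← integral_add (hI₁.const_mul 2) (hI₂.const_mul (2 * s + 1)),
    ← integral_add ((hI₁.const_mul 2).fun_add (hI₂.const_mul (2 * s + 1))) hI₃]
  congr 3 with z
  simp only [metricDensity]
  ring

theorem integral_metricDensity_le_Gmet (h : BoundedTangent s c K M γ u) (hs : 3 / 2 < s) :
    ∫ z, metricDensity s (twoPointJet γ z) (twoPointJet u z) ∂torusMeasure ≤ Gmet s γ u u := by
  have hH : 0 ≤ innerH1g γ u u :=
    integral_nonneg fun x => mul_nonneg real_inner_self_nonneg (norm_nonneg _)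
  have hL : 0 ≤ innerL2g γ u u :=
    integral_nonneg fun x => mul_nonneg real_inner_self_nonneg (norm_nonneg _)
  rw [h.Gmet_self_eq hs]
  linarith

theorem innerL2g_le (h : BoundedTangent s c K M γ u) (hs : 3 / 2 < s) :
    innerL2g γ u u ≤ ((1 + morreyConst (s - 1)) * M) ^ 2 * (morreyConst (s - 1) * K) := by
  have hm : 0 ≤ morreyConst (s - 1) := morreyConst_nonneg (by linarith)
  have hbound (x : ℝ) : ‖⟪u x, u x⟫ * ‖deriv γ x‖‖ ≤
      ((1 + morreyConst (s - 1)) * M) ^ 2 * (morreyConst (s - 1) * K) := by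
    rw [norm_mul, norm_norm, real_inner_self_eq_norm_sq, norm_pow, norm_norm]
    gcongr
    · exact (norm_le_mul_hsNorm hs h.field x).trans (by gcongr; exact h.field_le)
    · exact h.self.norm_deriv_le hs x
  have := norm_integral_le_of_norm_le_const (μ := volume.restrict I01) (Eventually.of_forall hbound)
  exact (le_abs_self _).trans (by simpa [innerL2g] using this)

theorem innerH1g_le (h : BoundedTangent s c K M γ u) (hs : 3 / 2 < s) :
    innerH1g γ u u ≤ tangentLip s c M ^ 2 * (morreyConst (s - 1) * K) := by
  have hbound (x : ℝ) : ‖⟪Dg γ u x, Dg γ u x⟫ * ‖deriv γ x‖‖ ≤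
      tangentLip s c M ^ 2 * (morreyConst (s - 1) * K) := by
    have hγ : 0 < ‖deriv γ x‖ := h.pos.trans_le (h.chordArc.le_norm_deriv x)
    rw [norm_mul, norm_norm, inner_Dg_self, ← div_pow, norm_pow, norm_div, norm_norm, norm_norm]
    gcongr
    · exact (div_le_iff₀ hγ).2 (h.norm_deriv_le_mul hs x)
    · exact h.self.norm_deriv_le hs x
  have := norm_integral_le_of_norm_le_const (μ := volume.restrict I01) (Eventually.of_forall hbound)
  exact (le_abs_self _).trans (by simpa [innerH1g] using this)

theorem Gmet_self_le (h : BoundedTangent s c K M γ u) (hs : 3 / 2 < s) :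
    Gmet s γ u u ≤ metricBound s c K M + tangentLip s c M ^ 2 * (morreyConst (s - 1) * K) +
      ((1 + morreyConst (s - 1)) * M) ^ 2 * (morreyConst (s - 1) * K) := by
  rw [h.Gmet_self_eq hs]
  gcongr
  exacts [h.integral_metricDensity_le hs, h.innerH1g_le hs, h.innerL2g_le hs]

end BoundedTangent

end Metric

section Path

theorem aestronglyMeasurable_restrict_prod {X Y E : Type*} [TopologicalSpace X]
    [MeasurableSpace X] [OpensMeasurableSpace X] [SecondCountableTopology X] [TopologicalSpace Y]
    [MeasurableSpace Y] [OpensMeasurableSpace Y] [TopologicalSpace E]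
    [TopologicalSpace.PseudoMetrizableSpace E] [SecondCountableTopology E] {μ : Measure X}
    {ν : Measure Y} [SFinite μ] [SFinite ν] {S : Set X} (hS : MeasurableSet S) {f : X × Y → E}
    (hf : ContinuousOn f (S ×ˢ univ)) : AEStronglyMeasurable f ((μ.restrict S).prod ν) := by
  rw [← Measure.restrict_univ (μ := ν), Measure.prod_restrict]
  exact hf.aestronglyMeasurable (hS.prod MeasurableSet.univ)

theorem lintegral_ofReal_mul_sqrt_rpow {Ω : Type*} [MeasurableSpace Ω] {ζ : Measure Ω}
    {f : Ω → ℝ} (hf : Integrable f ζ) (hf₀ : ∀ z, 0 ≤ f z) {k : ℝ} (hk : 0 ≤ k) :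
    (∫⁻ z, ENNReal.ofReal (k * √(f z)) ^ (2 : ℝ) ∂ζ) ^ (1 / 2 : ℝ) =
      ENNReal.ofReal (k * √(∫ z, f z ∂ζ)) := by
  have hsq (z : Ω) : ENNReal.ofReal (k * √(f z)) ^ (2 : ℝ) = ENNReal.ofReal (k ^ 2 * f z) := by
    rw [ENNReal.ofReal_rpow_of_nonneg (by positivity) zero_le_two, rpow_two, mul_pow,
      sq_sqrt (hf₀ z)]
  simp only [hsq]
  rw [← ofReal_integral_eq_lintegral_ofReal (hf.const_mul _)
      (Eventually.of_forall fun z => mul_nonneg (sq_nonneg k) (hf₀ z)),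
    ENNReal.ofReal_rpow_of_nonneg
      (integral_nonneg fun z => mul_nonneg (sq_nonneg k) (hf₀ z)) (by norm_num),
    integral_const_mul, ← sqrt_eq_rpow, sqrt_mul (sq_nonneg k), sqrt_sq hk]

theorem HsContOn.continuousOn_twoPointJet {n : ℕ} {s : ℝ} {F : ℝ → ℝ → En n} {S : Set ℝ}
    (hs : 3 / 2 < s) (hF : ∀ t ∈ S, InHs s (F t)) (hc : HsContOn s F S) :
    ContinuousOn (Function.uncurry fun t => twoPointJet (F t)) (S ×ˢ univ) := by
  have hfst : MapsTo (fun q : ℝ × ℝ × ℝ => (q.1, q.2.1)) (S ×ˢ univ) (S ×ˢ univ) :=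
    fun q hq => ⟨hq.1, mem_univ _⟩
  have hsnd : MapsTo (fun q : ℝ × ℝ × ℝ => (q.1, q.2.2)) (S ×ˢ univ) (S ×ˢ univ) :=
    fun q hq => ⟨hq.1, mem_univ _⟩
  have h := hc.continuousOn hs hF
  have h' := hc.continuousOn_deriv hs hF
  exact (h'.comp (by fun_prop) hfst).prodMk ((h'.comp (by fun_prop) hsnd).prodMk
    ((h.comp (by fun_prop) hsnd).sub (h.comp (by fun_prop) hfst)))

namespace C1Path

variable {s : ℝ} {n : ℕ} (P : C1Path s n)

theorem inHs {t : ℝ} (ht : t ∈ Icc (0 : ℝ) 1) : InHs s (P.Γ t) := (P.mem t ht).1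

theorem hsContOn : HsContOn s P.Γ (Icc 0 1) :=
  IsHsDerivOn.hsContOn (fun _ => P.inHs) P.memV P.isDeriv

theorem exists_boundedTangent (hs : 3 / 2 < s) :
    ∃ c K M, ∀ t ∈ Icc (0 : ℝ) 1, BoundedTangent s c K M (P.Γ t) (P.V t) := by
  obtain ⟨K, hK⟩ := P.hsContOn.exists_hsNorm_le isCompact_Icc fun _ => P.inHs
  obtain ⟨M, hM⟩ := HsContOn.exists_hsNorm_le isCompact_Icc P.memV P.contV
  have hcont : Continuous fun q : Icc (0 : ℝ) 1 × ℝ => deriv (P.Γ q.1) q.2 :=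
    (P.hsContOn.continuousOn_deriv hs fun _ => P.inHs).comp_continuous
      (f := fun q : Icc (0 : ℝ) 1 × ℝ => ((q.1 : ℝ), q.2)) (by fun_prop)
      fun q => ⟨q.1.2, mem_univ _⟩
  obtain ⟨c, hc, hchord⟩ := exists_pos_chordArcBound
    (γ := fun t : Icc (0 : ℝ) 1 => P.Γ t) hcont (fun t => (P.inHs t.2).2.1)
    (fun t => (P.inHs t.2).1) (fun t => (P.mem t t.2).2.1) fun t => (P.mem t t.2).2.2
  exact ⟨c, K, M, fun t ht =>
    ⟨hc, hchord ⟨t, ht⟩, P.inHs ht, P.memV t ht, hK t ht, hM t ht⟩⟩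

theorem aestronglyMeasurable_metricDensity (hs : 3 / 2 < s) :
    AEStronglyMeasurable (Function.uncurry fun t z =>
      metricDensity s (twoPointJet (P.Γ t) z) (twoPointJet (P.V t) z))
      ((volume.restrict (Icc 0 1)).prod torusMeasure) := by
  have hΓ := aestronglyMeasurable_restrict_prod (μ := volume) (ν := torusMeasure)
    measurableSet_Icc (P.hsContOn.continuousOn_twoPointJet hs fun _ => P.inHs)
  have hV := aestronglyMeasurable_restrict_prod (μ := volume) (ν := torusMeasure)
    measurableSet_Icc (HsContOn.continuousOn_twoPointJet hs P.memV P.contV)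
  have hmeas := measurable_metricDensity s (E := En n) measurable_fst measurable_snd
  exact (hmeas.comp_aemeasurable (hΓ.aemeasurable.prodMk hV.aemeasurable)).aestronglyMeasurable

theorem aestronglyMeasurable_innerL2g (hs : 3 / 2 < s) :
    AEStronglyMeasurable (fun t => innerL2g (P.Γ t) (P.V t) (P.V t))
      (volume.restrict (Icc 0 1)) := by
  have hV := HsContOn.continuousOn hs P.memV P.contV
  have hΓ' := P.hsContOn.continuousOn_deriv hs fun _ => P.inHs
  exact (aestronglyMeasurable_restrict_prod measurableSet_Icc
    ((hV.inner (𝕜 := ℝ) hV).mul hΓ'.norm)).integral_prod_right'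

theorem aestronglyMeasurable_innerH1g (hs : 3 / 2 < s) :
    AEStronglyMeasurable (fun t => innerH1g (P.Γ t) (P.V t) (P.V t))
      (volume.restrict (Icc 0 1)) := by
  have hV' := HsContOn.continuousOn_deriv hs P.memV P.contV
  have hΓ' := P.hsContOn.continuousOn_deriv hs fun _ => P.inHs
  have hD := (hΓ'.norm.inv₀ fun q hq =>
    norm_ne_zero_iff.2 ((P.mem q.1 hq.1).2.2 q.2)).smul hV'
  exact (aestronglyMeasurable_restrict_prod measurableSet_Icc
    ((hD.inner (𝕜 := ℝ) hD).mul hΓ'.norm)).integral_prod_right'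

theorem integrableOn_sqrt_Gmet (hs : 3 / 2 < s) :
    IntegrableOn (fun t => √(Gmet s (P.Γ t) (P.V t) (P.V t))) (Icc 0 1) := by
  obtain ⟨c, K, M, hP⟩ := P.exists_boundedTangent hs
  have hmeas : AEStronglyMeasurable (fun t => Gmet s (P.Γ t) (P.V t) (P.V t))
      (volume.restrict (Icc 0 1)) :=
    (((P.aestronglyMeasurable_metricDensity hs).integral_prod_right'.add
      (P.aestronglyMeasurable_innerH1g hs)).add (P.aestronglyMeasurable_innerL2g hs)).congr <|
      (ae_restrict_iff' measurableSet_Icc).2 <|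
        Eventually.of_forall fun t ht => ((hP t ht).Gmet_self_eq hs).symm
  obtain ⟨B, hB⟩ : ∃ B, ∀ t ∈ Icc (0 : ℝ) 1, Gmet s (P.Γ t) (P.V t) (P.V t) ≤ B :=
    ⟨_, fun t ht => (hP t ht).Gmet_self_le hs⟩
  refine Integrable.of_bound (continuous_sqrt.comp_aestronglyMeasurable hmeas) √B
    ((ae_restrict_iff' measurableSet_Icc).2 <| Eventually.of_forall fun t ht => ?_)
  rw [norm_of_nonneg (sqrt_nonneg _)]
  exact sqrt_le_sqrt (hB t ht)

theorem abs_sqrt_tpDensity_sub_le_of_ne (hs : 3 / 2 < s) {z : ℝ × ℝ} (h₁ : z.1 ∈ I01)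
    (h₂ : z.2 ∈ I01) (hne : z.1 ≠ z.2) :
    |√(tpDensity s (twoPointJet (P.Γ 1) z) (twoPointJet (P.Γ 1) z)) -
        √(tpDensity s (twoPointJet (P.Γ 0) z) (twoPointJet (P.Γ 0) z))| ≤
      ∫ t in (0 : ℝ)..1, √(1 + (2 * s + 1) / 4) *
        √(metricDensity s (twoPointJet (P.Γ t) z) (twoPointJet (P.V t) z)) := by
  have hsection {F : ℝ → ℝ → En n} (hF : ∀ t ∈ Icc (0 : ℝ) 1, InHs s (F t))
      (hc : HsContOn s F (Icc 0 1)) : ContinuousOn (fun t => twoPointJet (F t) z) (Icc 0 1) :=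
    (hc.continuousOn_twoPointJet hs hF).comp (f := fun t => (t, z)) (by fun_prop)
      fun t ht => ⟨ht, mem_univ _⟩
  have hΓ := hsection (fun _ => P.inHs) P.hsContOn
  have hV := hsection P.memV P.contV
  have himm (x : ℝ) : ∀ t ∈ Icc (0 : ℝ) 1, deriv (P.Γ t) x ≠ 0 := fun t ht => (P.mem t ht).2.2 x
  have hchord : ∀ t ∈ Icc (0 : ℝ) 1, P.Γ t z.2 - P.Γ t z.1 ≠ 0 := fun t ht =>
    sub_ne_zero.2 fun heq => hne ((P.mem t ht).2.1 h₂ h₁ heq).symm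
  have hjet {t : ℝ} (ht : t ∈ Ioo (0 : ℝ) 1) :
      HasDerivAt (fun τ => twoPointJet (P.Γ τ) z) (twoPointJet (P.V t) z) t := by
    have hnhds := Icc_mem_nhds ht.1 ht.2
    have hd := IsHsDerivOn.hasDerivAt hs (fun _ => P.inHs) P.memV P.isDeriv hnhds
    have hd' := IsHsDerivOn.hasDerivAt_deriv hs (fun _ => P.inHs) P.memV P.isDeriv hnhds
    exact (hd' z.1).prodMk ((hd' z.2).prodMk ((hd z.2).sub (hd z.1)))
  have hmetric := continuousOn_metricDensity (s := s) hΓ hV (himm z.1) (himm z.2) hchord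
  refine abs_sqrt_sub_sqrt_le_integral zero_le_one
    (continuousOn_tpDensity hΓ hΓ (himm z.1) hchord) (fun t _ => tpDensity_nonneg _ _ _)
    (fun t ht => ?_) (continuousOn_const.mul hmetric.sqrt).integrableOn_Icc
    (fun t _ => abs_deriv_tpDensity_le (by linarith) _ _) (fun t => by positivity)
  have ht' := Ioo_subset_Icc_self ht
  exact hasDerivAt_tpDensity (hjet ht) (himm z.1 t ht') (himm z.2 t ht') (hchord t ht')

theorem ofReal_abs_sqrt_tpDensity_sub_le (hs : 3 / 2 < s) {z : ℝ × ℝ} (h₁ : z.1 ∈ I01)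
    (h₂ : z.2 ∈ I01) :
    ENNReal.ofReal |√(tpDensity s (twoPointJet (P.Γ 1) z) (twoPointJet (P.Γ 1) z)) -
        √(tpDensity s (twoPointJet (P.Γ 0) z) (twoPointJet (P.Γ 0) z))| ≤
      ∫⁻ t in Icc (0 : ℝ) 1, ENNReal.ofReal (√(1 + (2 * s + 1) / 4) *
        √(metricDensity s (twoPointJet (P.Γ t) z) (twoPointJet (P.V t) z))) := by
  rcases eq_or_ne z.1 z.2 with heq | hne
  · have hzero (γ : ℝ → En n) : tpDensity s (twoPointJet γ z) (twoPointJet γ z) = 0 :=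
      tpDensity_eq_zero (by linarith) (by simp [twoPointJet, heq]) _
    simp [hzero]
  · refine (ENNReal.ofReal_le_ofReal
      (P.abs_sqrt_tpDensity_sub_le_of_ne hs h₁ h₂ hne)).trans ?_
    rw [intervalIntegral.integral_of_le zero_le_one, ← integral_Icc_eq_integral_Ioc]
    refine (Real.ofReal_le_enorm _).trans ((enorm_integral_le_lintegral_enorm _).trans_eq ?_)
    exact lintegral_congr fun t => Real.enorm_of_nonneg (by positivity)

theorem abs_sqrt_Etp_sub_le_pathLen (hs : 3 / 2 < s) :
    |√(Etp s (P.Γ 1)) - √(Etp s (P.Γ 0))| ≤ √(1 + (2 * s + 1) / 4) * pathLen P := by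
  obtain ⟨c, K, M, hP⟩ := P.exists_boundedTangent hs
  have hs' : 2 * s + 1 ≠ 0 := by linarith
  have hlen : 0 ≤ pathLen P := intervalIntegral.integral_nonneg zero_le_one fun _ _ => sqrt_nonneg _
  have hE {t : ℝ} (ht : t ∈ Icc (0 : ℝ) 1) := Etp_eq_integral_tpDensity hs' (P.inHs ht).2.1
  have hint {t : ℝ} (ht : t ∈ Icc (0 : ℝ) 1) := (hP t ht).self.integrable_tpDensity hs
  have hmeas := (P.aestronglyMeasurable_metricDensity hs).aemeasurable
  have hpointwise := fun z (hz : z ∈ I01 ×ˢ I01) =>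
    P.ofReal_abs_sqrt_tpDensity_sub_le hs (z := z) hz.1 hz.2
  rw [← ENNReal.ofReal_le_ofReal_iff (by positivity), hE ⟨zero_le_one, le_rfl⟩,
    hE ⟨le_rfl, zero_le_one⟩]
  calc _ ≤ ∫⁻ t in Icc (0 : ℝ) 1, (∫⁻ z, ENNReal.ofReal (√(1 + (2 * s + 1) / 4) *
        √(metricDensity s (twoPointJet (P.Γ t) z) (twoPointJet (P.V t) z))) ^ (2 : ℝ)
        ∂torusMeasure) ^ (1 / 2 : ℝ) := by
        refine abs_sqrt_integral_sub_sqrt_integral_le_lintegral (hint ⟨le_rfl, zero_le_one⟩)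
          (hint ⟨zero_le_one, le_rfl⟩) (fun _ => tpDensity_nonneg _ _ _)
          (fun _ => tpDensity_nonneg _ _ _) (hmeas.sqrt.const_mul _).ennreal_ofReal ?_
        rw [torusMeasure, Measure.prod_restrict]
        exact (ae_restrict_iff' (measurableSet_Ico.prod measurableSet_Ico)).2
          (Eventually.of_forall hpointwise)
    _ ≤ ∫⁻ t in Icc (0 : ℝ) 1, ENNReal.ofReal (√(1 + (2 * s + 1) / 4) *
        √(Gmet s (P.Γ t) (P.V t) (P.V t))) := by
        refine setLIntegral_mono' measurableSet_Icc fun t ht => ?_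
        rw [lintegral_ofReal_mul_sqrt_rpow ((hP t ht).integrable_metricDensity hs)
          (fun z => metricDensity_nonneg (by linarith) _ _) (sqrt_nonneg _)]
        gcongr
        exact (hP t ht).integral_metricDensity_le_Gmet hs
    _ = _ := by
        rw [← ofReal_integral_eq_lintegral_ofReal ((P.integrableOn_sqrt_Gmet hs).const_mul _)
          (Eventually.of_forall fun t => by positivity), integral_const_mul, pathLen,
          intervalIntegral.integral_of_le zero_le_one, ← integral_Icc_eq_integral_Ioc]

end C1Path

end Path

section Geodesic

variable {n : ℕ} {s : ℝ}

theorem abs_sqrt_Etp_sub_le_geodDist (hs : 3 / 2 < s) (γ₀ γ₁ : ℝ → En n) :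
    ENNReal.ofReal |√(Etp s γ₁) - √(Etp s γ₀)| ≤
      ENNReal.ofReal √(1 + (2 * s + 1) / 4) * geodDist s γ₁ γ₀ := by
  have hk : ENNReal.ofReal √(1 + (2 * s + 1) / 4) ≠ 0 :=
    (ENNReal.ofReal_pos.2 (sqrt_pos.2 (by linarith))).ne'
  simp only [geodDist, ENNReal.mul_iInf_of_ne hk ENNReal.ofReal_ne_top]
  refine le_iInf₂ fun P ⟨h₀, h₁⟩ => ?_
  rw [← ENNReal.ofReal_mul (sqrt_nonneg _), ← h₀, ← h₁, abs_sub_comm]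
  exact ENNReal.ofReal_le_ofReal (P.abs_sqrt_Etp_sub_le_pathLen hs)

theorem GBounded.exists_Etp_le (hs : 3 / 2 < s) {U : Set (ℝ → En n)} (hU : GBounded s U) :
    ∃ M : ℝ, ∀ γ ∈ U, Etp s γ ≤ M := by
  obtain ⟨-, γ₀, -, R, hR⟩ := hU
  have hk : 0 ≤ √(1 + (2 * s + 1) / 4) := sqrt_nonneg _
  refine ⟨(√(Etp s γ₀) + √(1 + (2 * s + 1) / 4) * max R 0) ^ 2, fun γ hγ => ?_⟩
  have hdist : geodDist s γ γ₀ ≤ ENNReal.ofReal (max R 0) :=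
    (hR γ hγ).trans (ENNReal.ofReal_le_ofReal (le_max_left _ _))
  have hlip := (abs_sqrt_Etp_sub_le_geodDist hs γ₀ γ).trans (mul_le_mul_right hdist _)
  rw [← ENNReal.ofReal_mul hk, ENNReal.ofReal_le_ofReal_iff (by positivity)] at hlip
  rw [← sqrt_le_left (by positivity)]
  linarith [le_abs_self (√(Etp s γ) - √(Etp s γ₀))]

end Geodesic

/-- Lipschitz continuity of `√E`: with `p = 2s+1`, for all
`γ₀, γ₁ ∈ 𝓜` one has `|√(E(γ₁)) − √(E(γ₀))| ≤ √(1 + p/4) · d_G(γ₁,γ₀)`;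
in particular `E` is bounded on every `G`-bounded subset of `𝓜`. -/
theorem statement10 (s : ℝ) (hs : s ∈ Set.Ioo (3 / 2 : ℝ) 2) (n : ℕ) (hn : 2 ≤ n) :
    (∀ γ₀ γ₁ : ℝ → En n, InM s γ₀ → InM s γ₁ →
      ENNReal.ofReal |Real.sqrt (Etp s γ₁) - Real.sqrt (Etp s γ₀)| ≤
        ENNReal.ofReal (Real.sqrt (1 + (2 * s + 1) / 4)) * geodDist s γ₁ γ₀) ∧
    ∀ U : Set (ℝ → En n), GBounded s U → ∃ M : ℝ, ∀ γ ∈ U, Etp s γ ≤ M :=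
  ⟨fun γ₀ γ₁ _ _ => abs_sqrt_Etp_sub_le_geodDist hs.1 γ₀ γ₁, fun _ hU => hU.exists_Etp_le hs.1⟩
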